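/- arXiv:cs/0612119 — 3 statements merged into one kernel-verified Lean document; each statement's English description precedes it below -/
import Mathlib

section
/- Let A, B ∈ D[X] have degree d and valuation 0, let (S_i)_{−1 ≤ i ≤ d} be their sequence of symmetric subresultants, and suppose the pair (S_j, S_{j+1}) is (α,β)-defective with α = 0 and β > 1. If j > 0, then S_j(0)^{k−1}·S_{j+k} = S_{j+1}(0)^{k−1}·S_{j+1} for k = 2, …, β−1. If j = 0, then S_k = S_1(0)^{k−1}·S_1 for k = 2, …, β−1. -/
open Polynomial

/-- The `2j × 2j` square submatrix `Sylv_{j,ℓ}(A,B)` of the Sylvester-type matrix of `A` and `B`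
(of formal degree `d`): rows are the coefficient vectors of `A, XA, …, X^{j-1}A, B, …, X^{j-1}B`,
keeping the columns of degrees `0, …, j-2`, the column of degree `j-1+ℓ`, and the columns of
degrees `d, …, d+j-1`. -/
noncomputable def sylvMat {R : Type*} [CommRing R] (A B : R[X]) (d j ℓ : ℕ) :
    Matrix (Fin (2 * j)) (Fin (2 * j)) R := fun r c =>
  (if (r : ℕ) < j then X ^ (r : ℕ) * A else X ^ ((r : ℕ) - j) * B).coeff
    (if (c : ℕ) < j - 1 then (c : ℕ)
     else if (c : ℕ) = j - 1 then j - 1 + ℓ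
     else d + ((c : ℕ) - j))

/-- The sequence of symmetric subresultants of `A` and `B` (of formal degree `d`):
`S_0 = B` and `S_j = ∑_{ℓ=0}^{d-j} det (Sylv_{j,ℓ}(A,B)) · X^ℓ` for `1 ≤ j`. -/
noncomputable def symSubres {R : Type*} [CommRing R] (A B : R[X]) (d j : ℕ) : R[X] :=
  if j = 0 then B
  else ∑ ℓ ∈ Finset.range (d - j + 1), C (sylvMat A B d j ℓ).det * X ^ ℓ

/-- The pair `(S_j, S_{j+1})` of symmetric subresultants of `A`, `B` (formal degree `d`) is
`(α,β)`-defective: `v(S_j) = 0`, `deg S_j = d - j`, `v(S_{j+1}) = α`, `deg S_{j+1} = d - j - β`. -/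
def IsDefective {R : Type*} [CommRing R] (A B : R[X]) (d j α β : ℕ) : Prop :=
  (symSubres A B d j).coeff 0 ≠ 0 ∧
  (symSubres A B d j).natDegree + j = d ∧
  symSubres A B d (j + 1) ≠ 0 ∧
  (symSubres A B d (j + 1)).natTrailingDegree = α ∧
  (symSubres A B d (j + 1)).natDegree + β + j = d

/-- Row polynomials of the Sylvester-type matrix. -/
noncomputable def sylvRow {R : Type*} [CommRing R] (A B : R[X]) (j r : ℕ) : R[X] :=
  if r < j then X ^ r * A else X ^ (r - j) * B

/-- The principal coefficients. -/
noncomputable def sylvP {R : Type*} [CommRing R] (A B : R[X]) (d n : ℕ) : R :=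
  (sylvMat A B d n 0).det

lemma sylvMat_apply {R : Type*} [CommRing R] (A B : R[X]) (d j ℓ : ℕ) (r c : Fin (2 * j)) :
    sylvMat A B d j ℓ r c = (sylvRow A B j r).coeff
      (if (c : ℕ) < j - 1 then (c : ℕ)
       else if (c : ℕ) = j - 1 then j - 1 + ℓ
       else d + ((c : ℕ) - j)) := rfl

lemma sylv_minor {R : Type*} [CommRing R] (A B : R[X]) (d n ℓ : ℕ)
    (hA : A.natDegree ≤ d) (hB : B.natDegree ≤ d) :
    (sylvMat A B d (n + 1) ℓ).adjugate (⟨n, by omega⟩ : Fin (2 * n + 1 + 1))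
      (Fin.last (2 * n + 1)) = -(A.coeff d * sylvP A B d n) := by
  have h1 := Matrix.adjugate_fin_succ_eq_det_submatrix
    (A := (sylvMat A B d (n + 1) ℓ : Matrix (Fin (2 * n + 1 + 1)) (Fin (2 * n + 1 + 1)) R))
    (⟨n, by omega⟩ : Fin (2 * n + 1 + 1)) (Fin.last (2 * n + 1))
  refine h1.trans ?_
  rw [Matrix.det_succ_column _ (Fin.last (2 * n))]
  rw [Finset.sum_eq_single (⟨n, by omega⟩ : Fin (2 * n + 1))]
  · have e1 : (Matrix.submatrix (sylvMat A B d (n + 1) ℓ : Matrix (Fin (2 * n + 1 + 1)) (Fin (2 * n + 1 + 1)) R)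
        (Fin.last (2 * n + 1)).succAbove (Fin.succAbove (⟨n, by omega⟩ : Fin (2 * n + 1 + 1))))
        (⟨n, by omega⟩ : Fin (2 * n + 1)) (Fin.last (2 * n)) = A.coeff d := by
      rw [Matrix.submatrix_apply]
      erw [sylvMat_apply]
      have hr : (((Fin.last (2 * n + 1)).succAbove (⟨n, by omega⟩ : Fin (2 * n + 1)) :
          Fin (2 * n + 1 + 1)) : ℕ) = n := by simp
      have hc : ((Fin.succAbove (⟨n, by omega⟩ : Fin (2 * n + 1 + 1)) (Fin.last (2 * n)) :
          Fin (2 * n + 1 + 1)) : ℕ) = 2 * n + 1 := by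
        rw [Fin.succAbove_of_le_castSucc]
        · simp
        · rw [Fin.le_def]; simp; omega
      erw [hr, hc]
      rw [if_neg (by omega), if_neg (by omega), sylvRow, if_pos (by omega)]
      rw [show d + (2 * n + 1 - (n + 1)) = d + n by omega, mul_comm, coeff_mul_X_pow]
    rw [e1]
    have e2 : (Matrix.submatrix (Matrix.submatrix (sylvMat A B d (n + 1) ℓ : Matrix (Fin (2 * n + 1 + 1)) (Fin (2 * n + 1 + 1)) R)
        (Fin.last (2 * n + 1)).succAbove (Fin.succAbove (⟨n, by omega⟩ : Fin (2 * n + 1 + 1))))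
        (Fin.succAbove (⟨n, by omega⟩ : Fin (2 * n + 1))) (Fin.last (2 * n)).succAbove)
        = sylvMat A B d n 0 := by
      ext r c
      rw [Matrix.submatrix_apply, Matrix.submatrix_apply]
      erw [sylvMat_apply]
      rw [sylvMat_apply]
      have hr : (((Fin.last (2 * n + 1)).succAbove ((⟨n, by omega⟩ : Fin (2 * n + 1)).succAbove r) :
          Fin (2 * n + 1 + 1)) : ℕ) = if (r : ℕ) < n then (r : ℕ) else r + 1 := by
        rw [Fin.succAbove_last_apply]
        simp only [Fin.succAbove, Fin.lt_def, Fin.val_castSucc]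
        split_ifs <;> simp
      have hc : ((Fin.succAbove (⟨n, by omega⟩ : Fin (2 * n + 1 + 1)) ((Fin.last (2 * n)).succAbove c) :
          Fin (2 * n + 1 + 1)) : ℕ) = if (c : ℕ) < n then (c : ℕ) else c + 1 := by
        simp [Fin.succAbove, Fin.lt_def]
        split_ifs <;> simp
      erw [hr, hc]
      have hr2 := r.2
      have hc2 := c.2
      congr 1
      · unfold sylvRow
        by_cases h : (r : ℕ) < n
        · rw [if_pos h, if_pos (by omega), if_pos h]
        · rw [if_neg h, if_neg (by omega), if_neg h]
          congr 2
          omega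
      · split_ifs <;> omega
    rw [e2]
    simp only [Fin.val_last]
    rw [sylvP]
    have hs : (-1 : R) ^ (2 * n + 1 + n) * (-1) ^ (n + 2 * n) = -1 := by
      rw [← pow_add, show 2 * n + 1 + n + (n + 2 * n) = 2 * (3 * n) + 1 by ring, pow_succ, pow_mul]
      simp
    linear_combination (A.coeff d * (sylvMat A B d n 0).det) * hs
  · intro b _ hb
    have e1 : (Matrix.submatrix (sylvMat A B d (n + 1) ℓ : Matrix (Fin (2 * n + 1 + 1)) (Fin (2 * n + 1 + 1)) R)
        (Fin.last (2 * n + 1)).succAbove (Fin.succAbove (⟨n, by omega⟩ : Fin (2 * n + 1 + 1))))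
        b (Fin.last (2 * n)) = 0 := by
      rw [Matrix.submatrix_apply]
      erw [sylvMat_apply]
      have hr : (((Fin.last (2 * n + 1)).succAbove b :
          Fin (2 * n + 1 + 1)) : ℕ) = b := by simp
      have hc : ((Fin.succAbove (⟨n, by omega⟩ : Fin (2 * n + 1 + 1)) (Fin.last (2 * n)) :
          Fin (2 * n + 1 + 1)) : ℕ) = 2 * n + 1 := by
        rw [Fin.succAbove_of_le_castSucc]
        · simp
        · rw [Fin.le_def]; simp; omega
      erw [hr, hc]
      rw [if_neg (by omega), if_neg (by omega), sylvRow]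
      have hbn : (b : ℕ) ≠ n := fun h => hb (Fin.ext h)
      have hb2 := b.2
      split_ifs with h
      · rw [mul_comm, coeff_mul_X_pow', if_pos (by omega)]
        exact coeff_eq_zero_of_natDegree_lt (by omega)
      · rw [mul_comm, coeff_mul_X_pow', if_pos (by omega)]
        exact coeff_eq_zero_of_natDegree_lt (by omega)
    rw [e1]; simp
  · simp

/-- The cofactor combination of the rows. -/
noncomputable def sylvY {R : Type*} [CommRing R] (A B : R[X]) (d m : ℕ) : Fin (2 * (m + 1)) → R :=
  fun r => (sylvMat A B d (m + 1) 0).adjugate ⟨m, by omega⟩ r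

lemma sylvY_sum {R : Type*} [CommRing R] (A B : R[X]) (d m e : ℕ) :
    ∑ r, sylvY A B d m r * (sylvRow A B (m + 1) r).coeff e =
      ((sylvMat A B d (m + 1) 0).updateCol ⟨m, by omega⟩
        (fun r => (sylvRow A B (m + 1) r).coeff e)).det := by
  rw [← Matrix.cramer_apply, Matrix.cramer_eq_adjugate_mulVec]
  rfl

lemma sylvY_mid {R : Type*} [CommRing R] (A B : R[X]) (d m ℓ : ℕ) :
    ∑ r, sylvY A B d m r * (sylvRow A B (m + 1) r).coeff (m + ℓ) =
      (sylvMat A B d (m + 1) ℓ).det := by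
  rw [sylvY_sum]
  congr 1
  ext r c
  by_cases h : c = ⟨m, by omega⟩
  · subst h
    simp [sylvMat_apply]
  · rw [Matrix.updateCol_ne h, sylvMat_apply, sylvMat_apply]
    have h' : (c : ℕ) ≠ m := fun h2 => h (Fin.ext h2)
    congr 1
    split_ifs <;> omega

lemma sylvY_low {R : Type*} [CommRing R] (A B : R[X]) (d m e : ℕ) (he : e < m) :
    ∑ r, sylvY A B d m r * (sylvRow A B (m + 1) r).coeff e = 0 := by
  rw [sylvY_sum]
  apply Matrix.det_zero_of_column_eq (i := (⟨m, by omega⟩ : Fin (2 * (m + 1)))) (j := ⟨e, by omega⟩)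
  · intro h; rw [Fin.mk.injEq] at h; omega
  · intro k
    rw [Matrix.updateCol_self, Matrix.updateCol_ne, sylvMat_apply]
    · simp [he]
    · intro h; rw [Fin.mk.injEq] at h; omega

lemma sylvY_high {R : Type*} [CommRing R] (A B : R[X]) (d m i : ℕ) (hi : i ≤ m) :
    ∑ r, sylvY A B d m r * (sylvRow A B (m + 1) r).coeff (d + i) = 0 := by
  rw [sylvY_sum]
  apply Matrix.det_zero_of_column_eq (i := (⟨m, by omega⟩ : Fin (2 * (m + 1))))
    (j := ⟨m + 1 + i, by omega⟩)
  · intro h; rw [Fin.mk.injEq] at h; omega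
  · intro k
    rw [Matrix.updateCol_self, Matrix.updateCol_ne, sylvMat_apply]
    · congr 1
      simp only
      rw [if_neg (by omega), if_neg (by omega)]
      omega
    · intro h; rw [Fin.mk.injEq] at h; omega

lemma symSubres_coeff {R : Type*} [CommRing R] (A B : R[X]) (d j ℓ : ℕ) (hj : j ≠ 0) :
    (symSubres A B d j).coeff ℓ = if ℓ ≤ d - j then (sylvMat A B d j ℓ).det else 0 := by
  rw [symSubres, if_neg hj, finsetSum_coeff]
  simp only [coeff_C_mul_X_pow]
  rw [Finset.sum_ite_eq]
  simp [Nat.lt_succ_iff]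

/-- Embedding of row indices corresponding to multiplication by `X`. -/
def sylvShift (m : ℕ) (s : Fin (2 * (m + 1))) : Fin (2 * (m + 2)) :=
  ⟨if (s : ℕ) < m + 1 then s + 1 else s + 2, by have := s.2; split_ifs <;> omega⟩

lemma sylvRow_shift {R : Type*} [CommRing R] (A B : R[X]) (m : ℕ) (s : Fin (2 * (m + 1))) :
    sylvRow A B (m + 2) (sylvShift m s) = sylvRow A B (m + 1) s * X := by
  unfold sylvRow sylvShift
  by_cases h : (s : ℕ) < m + 1
  · simp only [if_pos h]
    rw [if_pos (by omega)]; ring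
  · simp only [if_neg h]
    rw [if_neg (by omega), show (s : ℕ) + 2 - (m + 2) = (s - (m + 1)) + 1 by omega]; ring

lemma sylv_step_coeff {R : Type*} [CommRing R] [IsDomain R] (A B : R[X]) (d m ℓ : ℕ)
    (hA : A.natDegree ≤ d) (hB : B.natDegree ≤ d) (ha : A.coeff d ≠ 0) (hd : m + 1 ≤ d)
    (hS : (sylvMat A B d (m + 1) (d - (m + 1))).det = 0) :
    sylvP A B d m * (sylvMat A B d (m + 2) ℓ).det =
      sylvP A B d (m + 1) * (sylvMat A B d (m + 1) ℓ).det := by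
  set M := sylvMat A B d (m + 2) ℓ with hM
  set y := sylvY A B d m with hy
  let cc : Fin (2 * (m + 2)) := ⟨m + 1, by omega⟩
  let lst : Fin (2 * (m + 2)) := ⟨2 * m + 3, by omega⟩
  let lst' : Fin (2 * (m + 1)) := ⟨2 * m + 1, by omega⟩
  have hsum : ∀ c, ∑ s, y s * M (sylvShift m s) c =
      if c = cc then (sylvMat A B d (m + 1) ℓ).det else 0 := by
    intro c
    have hc2 := c.2
    have hcc : c = cc ↔ (c : ℕ) = m + 1 := by simp [cc, Fin.ext_iff]
    simp only [hM, sylvMat_apply, sylvRow_shift]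
    by_cases h : (c : ℕ) = m + 1
    · rw [if_pos (hcc.2 h), if_neg (by omega), if_pos (by omega),
        show m + 2 - 1 + ℓ = (m + ℓ) + 1 by omega]
      simp only [coeff_mul_X]
      exact sylvY_mid A B d m ℓ
    · rw [if_neg (fun h2 => h (hcc.1 h2))]
      by_cases h1 : (c : ℕ) < m + 1
      · rw [if_pos (by omega)]
        rcases Nat.eq_zero_or_pos (c : ℕ) with h0 | h0
        · rw [h0]; simp
        · obtain ⟨e, he⟩ := Nat.exists_eq_succ_of_ne_zero h0.ne'
          rw [he]
          simp only [Nat.succ_eq_add_one, coeff_mul_X]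
          exact sylvY_low A B d m e (by omega)
      · rw [if_neg (by omega), if_neg (by omega)]
        rcases Nat.eq_or_lt_of_le (show m + 2 ≤ (c : ℕ) by omega) with h0 | h0
        · rw [show d + ((c : ℕ) - (m + 2)) = (m + (d - (m + 1))) + 1 by omega]
          simp only [coeff_mul_X]
          rw [hy, sylvY_mid, hS]
        · rw [show d + ((c : ℕ) - (m + 2)) = (d + (c - (m + 3))) + 1 by omega]
          simp only [coeff_mul_X]
          exact sylvY_high A B d m _ (by omega)
  have hadj : ∀ s, ∑ c, M (sylvShift m s) c * M.adjugate c lst =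
      if s = lst' then M.det else 0 := by
    intro s
    have := congrFun (congrFun (Matrix.mul_adjugate M) (sylvShift m s)) lst
    rw [Matrix.mul_apply] at this
    rw [this, Matrix.smul_apply, Matrix.one_apply]
    have hs : sylvShift m s = lst ↔ s = lst' := by
      have := s.2
      simp only [lst, lst', sylvShift, Fin.ext_iff]
      split_ifs <;> omega
    simp [hs]
  have key : ∑ s, y s * ∑ c, M (sylvShift m s) c * M.adjugate c lst =
      ∑ c, (∑ s, y s * M (sylvShift m s) c) * M.adjugate c lst := by
    simp only [Finset.mul_sum, Finset.sum_mul]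
    rw [Finset.sum_comm]
    simp only [mul_assoc]
  simp only [hsum, hadj] at key
  simp only [mul_ite, mul_zero, ite_mul, zero_mul, Finset.sum_ite_eq', Finset.mem_univ, if_true] at key
  have k1 : y lst' = -(A.coeff d * sylvP A B d m) := sylv_minor A B d m 0 hA hB
  have k2 : M.adjugate cc lst = -(A.coeff d * sylvP A B d (m + 1)) :=
    sylv_minor A B d (m + 1) ℓ hA hB
  rw [k1, k2] at key
  apply mul_left_cancel₀ ha
  linear_combination -key

lemma sylv_step {R : Type*} [CommRing R] [IsDomain R] (A B : R[X]) (d m : ℕ)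
    (hA : A.natDegree ≤ d) (hB : B.natDegree ≤ d) (ha : A.coeff d ≠ 0) (hd : m + 2 ≤ d)
    (hS : (symSubres A B d (m + 1)).coeff (d - (m + 1)) = 0) :
    C (sylvP A B d m) * symSubres A B d (m + 2) =
      C (sylvP A B d (m + 1)) * symSubres A B d (m + 1) := by
  have hS' := hS
  rw [symSubres_coeff _ _ _ _ _ (by omega), if_pos le_rfl] at hS'
  ext ℓ
  rw [coeff_C_mul, coeff_C_mul]
  by_cases h : ℓ ≤ d - (m + 2)
  · rw [symSubres_coeff _ _ _ _ _ (by omega), symSubres_coeff _ _ _ _ _ (by omega), if_pos h,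
      if_pos (by omega)]
    exact sylv_step_coeff A B d m ℓ hA hB ha (by omega) hS'
  · rw [symSubres_coeff _ _ (d) (m + 2) _ (by omega), if_neg h]
    by_cases h2 : ℓ = d - (m + 1)
    · rw [h2, hS]; simp
    · rw [symSubres_coeff _ _ _ _ _ (by omega), if_neg (by omega)]; simp

lemma sylvP_eq {R : Type*} [CommRing R] (A B : R[X]) (d n : ℕ) (hn : n ≠ 0) :
    (symSubres A B d n).coeff 0 = sylvP A B d n := by
  rw [symSubres_coeff _ _ _ _ _ hn, if_pos (Nat.zero_le _), sylvP]

lemma sylv_main {R : Type*} [CommRing R] [IsDomain R] (A B : R[X]) (d j β : ℕ)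
    (hA : A.natDegree ≤ d) (hB : B.natDegree ≤ d) (ha : A.coeff d ≠ 0)
    (hs : sylvP A B d j ≠ 0) (hg : sylvP A B d (j + 1) ≠ 0)
    (hdeg : (symSubres A B d (j + 1)).natDegree + β + j = d) (k : ℕ) (hk : k + 1 < β) :
    C (sylvP A B d j ^ k) * symSubres A B d (j + k + 1) =
      C (sylvP A B d (j + 1) ^ k) * symSubres A B d (j + 1) ∧
    (0 < k → sylvP A B d j * sylvP A B d (j + k + 1) =
      sylvP A B d (j + 1) * sylvP A B d (j + k)) ∧ sylvP A B d (j + k) ≠ 0 := by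
  induction k with
  | zero => simp [hs]
  | succ k ih =>
    obtain ⟨h1, h2, h3⟩ := ih (by omega)
    have c0 := congrArg (fun p => p.coeff 0) h1
    simp only [coeff_C_mul] at c0
    rw [sylvP_eq _ _ _ _ (by omega), sylvP_eq _ _ _ _ (by omega)] at c0
    have hne : sylvP A B d (j + k + 1) ≠ 0 := by
      intro h
      rw [h, mul_zero] at c0
      exact (mul_ne_zero (pow_ne_zero _ hg) hg) c0.symm
    have hz : (symSubres A B d (j + k + 1)).coeff (d - (j + k + 1)) = 0 := by
      have c1 := congrArg (fun p => p.coeff (d - (j + k + 1))) h1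
      simp only [coeff_C_mul] at c1
      rw [coeff_eq_zero_of_natDegree_lt (p := symSubres A B d (j + 1)) (by omega), mul_zero] at c1
      exact (mul_eq_zero.1 c1).resolve_left (pow_ne_zero _ hs)
    have st := sylv_step A B d (j + k) hA hB ha (by omega) hz
    have st2 : C (sylvP A B d j) * symSubres A B d (j + k + 2) =
        C (sylvP A B d (j + 1)) * symSubres A B d (j + k + 1) := by
      rcases Nat.eq_zero_or_pos k with rfl | hk0
      · exact st
      · have h2 := congrArg C (h2 hk0)
        simp only [C_mul] at h2
        apply mul_left_cancel₀ (C_ne_zero.2 h3)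
        linear_combination C (sylvP A B d j) * st + symSubres A B d (j + k + 1) * h2
    refine ⟨?_, ?_, hne⟩
    · rw [show j + (k + 1) + 1 = j + k + 2 by omega]
      simp only [C_pow] at h1 ⊢
      linear_combination C (sylvP A B d j) ^ k * st2 + C (sylvP A B d (j + 1)) * h1
    · intro _
      have c1 := congrArg (fun p => p.coeff 0) st2
      simp only [coeff_C_mul] at c1
      rw [sylvP_eq _ _ _ _ (by omega), sylvP_eq _ _ _ _ (by omega)] at c1
      exact c1

/-- Structure theorem, part 1, case `α = 0`, `β > 1`: if `(S_j, S_{j+1})` is `(0,β)`-defective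
with `β > 1`, then for `k = 2, …, β-1` one has
`S_j(0)^{k-1} · S_{j+k} = S_{j+1}(0)^{k-1} · S_{j+1}` when `j > 0`, and
`S_k = S_1(0)^{k-1} · S_1` when `j = 0`. -/
theorem structure_theorem_right_defective (D : Subring ℂ) (A B : Polynomial D) (d j β : ℕ)
    (hAdeg : A.degree = (d : ℕ)) (hBdeg : B.degree = (d : ℕ))
    (hAval : A.coeff 0 ≠ 0) (hBval : B.coeff 0 ≠ 0)
    (hdef : IsDefective A B d j 0 β) (hβ : 1 < β) :
    ∀ k, 2 ≤ k → k ≤ β - 1 →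
      (0 < j →
        C (((symSubres A B d j).coeff 0) ^ (k - 1)) * symSubres A B d (j + k) =
          C (((symSubres A B d (j + 1)).coeff 0) ^ (k - 1)) * symSubres A B d (j + 1)) ∧
      (j = 0 →
        symSubres A B d k =
          C (((symSubres A B d 1).coeff 0) ^ (k - 1)) * symSubres A B d 1) := by
  intro k hk1 hk2
  obtain ⟨d1, -, d3, d4, d5⟩ := hdef
  have hA : A.natDegree ≤ d := natDegree_le_of_degree_le hAdeg.le
  have hB : B.natDegree ≤ d := natDegree_le_of_degree_le hBdeg.le
  have ha : A.coeff d ≠ 0 := coeff_ne_zero_of_eq_degree hAdeg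
  have hg : sylvP A B d (j + 1) ≠ 0 := by
    rw [← sylvP_eq _ _ _ _ (by omega)]
    rcases natTrailingDegree_eq_zero.1 d4 with h | h
    · exact absurd h d3
    · exact h
  obtain ⟨n, rfl⟩ : ∃ n, k = n + 1 := ⟨k - 1, by omega⟩
  constructor
  · intro hj
    rw [sylvP_eq _ _ _ _ (by omega)] at d1
    have := (sylv_main A B d j β hA hB ha d1 hg d5 n (by omega)).1
    rw [sylvP_eq _ _ _ _ (by omega), sylvP_eq _ _ _ _ (by omega)]
    exact this
  · rintro rfl
    have p0 : sylvP A B d 0 = 1 := by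
      unfold sylvP
      haveI : IsEmpty (Fin (2 * 0)) := inferInstanceAs (IsEmpty (Fin 0))
      exact Matrix.det_isEmpty
    have := (sylv_main A B d 0 β hA hB ha (by rw [p0]; exact one_ne_zero) hg d5 n (by omega)).1
    rw [sylvP_eq _ _ _ _ (by omega)]
    rw [p0] at this
    simpa using this
end

section
/- Let A = Σ a_i X^i, B = Σ b_i X^i ∈ D[X] have degree d and valuation 0, let (S_i)_{−1 ≤ i ≤ d} be their sequence of symmetric subresultants, and suppose the pair (S_j, S_{j+1}) is (α,β)-defective. If j > 0, then lc(S_j)^α·S_j(0)^{β−1}·S_{j+α+β} = (−1)^{(α+β)α}·lc(S_{j+1})^α·tc(S_{j+1})^{β−1}·(S_{j+1}/X^α). If j = 0, then b_d^α·S_{α+β} = (−1)^{(α+β)α}·b_0^α·lc(S_1)^α·tc(S_1)^{β−1}·(S_1/X^α). -/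
open Polynomial

namespace SymSub

/-- determinant of a matrix of coefficients of polynomials -/
noncomputable def dt {R : Type*} [CommRing R] (N : ℕ) (r : ℕ → R[X]) (c : ℕ → ℕ) : R :=
  Matrix.det (Matrix.of fun i k : Fin N => (r i).coeff (c k))

section
variable {R : Type*} [CommRing R]

lemma dt_congr {N : ℕ} {r r' : ℕ → R[X]} {c c' : ℕ → ℕ} (h : ∀ i < N, r i = r' i)
    (hc : ∀ i < N, c i = c' i) : dt N r c = dt N r' c' := by
  unfold dt
  congr 1
  ext i k
  simp [h i i.2, hc k k.2]

lemma dt_rowop (N : ℕ) (r r' : ℕ → R[X]) (c : ℕ → ℕ) (T : ℕ → ℕ → R)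
    (h : ∀ i < N, r' i = ∑ k ∈ Finset.range N, C (T i k) * r k) :
    dt N r' c = Matrix.det (Matrix.of fun i k : Fin N => T i k) * dt N r c := by
  unfold dt
  rw [← Matrix.det_mul]
  congr 1
  ext i k
  simp [Matrix.mul_apply, h i i.2, Finset.sum_range]

lemma dt_rowop_lower (N : ℕ) (r r' : ℕ → R[X]) (c : ℕ → ℕ) (T : ℕ → ℕ → R)
    (h : ∀ i < N, r' i = ∑ k ∈ Finset.range N, C (T i k) * r k)
    (hT : ∀ i k, i < k → T i k = 0) :
    dt N r' c = (∏ i ∈ Finset.range N, T i i) * dt N r c := by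
  rw [dt_rowop N r r' c T h, Matrix.det_of_isLowerTriangular]
  · simp [Finset.prod_range]
  · intro i k hik
    exact hT _ _ hik

lemma dt_rowop_upper (N : ℕ) (r r' : ℕ → R[X]) (c : ℕ → ℕ) (T : ℕ → ℕ → R)
    (h : ∀ i < N, r' i = ∑ k ∈ Finset.range N, C (T i k) * r k)
    (hT : ∀ i k, k < i → T i k = 0) :
    dt N r' c = (∏ i ∈ Finset.range N, T i i) * dt N r c := by
  rw [dt_rowop N r r' c T h, Matrix.det_of_isUpperTriangular]
  · simp [Finset.prod_range]
  · intro i k hik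
    exact hT _ _ hik

lemma dt_smul (N : ℕ) (r : ℕ → R[X]) (c : ℕ → ℕ) (u : ℕ → R) :
    dt N (fun i => C (u i) * r i) c = (∏ i ∈ Finset.range N, u i) * dt N r c := by
  rw [dt_rowop_lower N r _ c (fun i k => if k = i then u i else 0)]
  · simp
  · intro i hi
    simp [apply_ite C, ite_mul, hi]
  · intro i k h
    rw [if_neg (by omega)]

lemma dt_last_col (N m : ℕ) (hm : m ≤ N) (r : ℕ → R[X]) (c : ℕ → ℕ)
    (h : ∀ i ≤ N, i ≠ m → (r i).coeff (c N) = 0) :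
    dt (N + 1) r c = (-1) ^ (m + N) * (r m).coeff (c N) *
      dt N (fun i => if i < m then r i else r (i + 1)) c := by
  unfold dt
  rw [Matrix.det_succ_column _ (Fin.last N), Finset.sum_eq_single (⟨m, by omega⟩ : Fin (N + 1))]
  · simp only [Matrix.of_apply, Fin.val_last]
    congr 2
    ext i k
    simp only [Matrix.submatrix_apply, Matrix.of_apply, Fin.succAbove_last, Fin.val_castSucc]
    congr 1
    simp only [Fin.succAbove, Fin.lt_def, Fin.val_castSucc]
    split_ifs <;> simp
  · intro i _ hi
    simp only [Matrix.of_apply, Fin.val_last]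
    rw [h i (by omega) (fun hh => hi (Fin.ext hh))]
    simp
  · simp

lemma dt_first_col (N : ℕ) (r : ℕ → R[X]) (c : ℕ → ℕ)
    (h : ∀ i ≤ N, i ≠ 0 → (r i).coeff (c 0) = 0) :
    dt (N + 1) r c = (r 0).coeff (c 0) *
      dt N (fun i => r (i + 1)) (fun i => c (i + 1)) := by
  unfold dt
  rw [Matrix.det_succ_column_zero, Finset.sum_eq_single (0 : Fin (N + 1))]
  · simp only [Matrix.of_apply, Fin.val_zero, pow_zero, one_mul]
    congr 2
  · intro i _ hi
    simp only [Matrix.of_apply, Fin.val_zero]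
    rw [h i (by omega) (fun hh => hi (Fin.ext hh))]
    simp
  · simp

lemma dt_move (N m : ℕ) (hm : m < N) (r : ℕ → R[X]) (c : ℕ → ℕ) :
    dt N (fun i => if i = 0 then r m else if i ≤ m then r (i - 1) else r i) c
      = (-1) ^ m * dt N r c := by
  obtain ⟨N, rfl⟩ : ∃ M, N = M + 1 := ⟨N - 1, by omega⟩
  have h := Matrix.det_permute (Fin.cycleRange (⟨m, hm⟩ : Fin (N + 1))).symm
    (Matrix.of fun i k : Fin (N + 1) => (r i).coeff (c k))
  rw [Equiv.Perm.sign_symm, Fin.sign_cycleRange] at h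
  unfold dt
  simp only [Units.val_pow_eq_pow_val, Units.val_neg, Units.val_one, Int.cast_pow, Int.cast_neg,
    Int.cast_one] at h
  rw [← h]
  congr 1
  ext i k
  simp only [Matrix.submatrix_apply, Matrix.of_apply, id]
  congr 1
  refine Fin.cases ?_ (fun i => ?_) i
  · simp
  · have : ((Fin.cycleRange (⟨m, hm⟩ : Fin (N + 1))).symm i.succ) =
      (⟨m, hm⟩ : Fin (N + 1)).succAbove i := Fin.cycleRange_symm_succ _ _
    rw [this]
    simp only [Fin.succAbove, Fin.lt_def, Fin.val_castSucc, Fin.val_succ]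
    by_cases h : (i : ℕ) < m
    · simp [h]
    · simp [h]

lemma dt_rot (N L t : ℕ) (hL : L ≤ N) (hL0 : 0 < L) (ht : t ≤ L) (r : ℕ → R[X]) (c : ℕ → ℕ) :
    dt N (fun i => if i < t then r (L - t + i) else if i < L then r (i - t) else r i) c
      = (-1) ^ (t * (L - 1)) * dt N r c := by
  induction t with
  | zero =>
    simp
  | succ t ih =>
    rw [Nat.succ_mul, pow_add, mul_comm ((-1 : R) ^ _), mul_assoc, ← ih (by omega),
      ← dt_move N (L - 1) (by omega)]
    apply dt_congr _ (fun _ _ => rfl)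
    intro i hi
    by_cases h0 : i = 0
    · subst h0
      have h2 : L - 1 < L := by omega
      by_cases h1 : L - 1 < t
      · omega
      · simp only [h1, h2, if_true, if_false]
        rw [if_pos (by omega)]
        congr 1 <;> omega
    · simp only [h0, if_false]
      split_ifs <;> first | omega | (congr 1 <;> omega)

/-- elimination determinant -/
noncomputable def M (P Q : R[X]) (n k ℓ : ℕ) : R :=
  dt (2 * k + 1) (fun i => if i < k + 1 then X ^ i * Q else X ^ (i - (k + 1)) * P)
    (fun c => if c < k then c else if c = k then k + ℓ else n + (c - (k + 1)))

lemma M_zero (P Q : R[X]) (n ℓ : ℕ) : M P Q n 0 ℓ = Q.coeff ℓ := by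
  simp [M, dt]

lemma M_one (P Q : R[X]) (n ℓ : ℕ) (hQ : ∀ i > n, Q.coeff i = 0) : M P Q (n + 1) 1 ℓ =
    -(Q.coeff 0 * Q.coeff n) * P.coeff (ℓ + 1) + Q.coeff 0 * P.coeff (n + 1) * Q.coeff ℓ
      + Q.coeff n * P.coeff 0 * Q.coeff (ℓ + 1) := by
  unfold M dt
  rw [show 2 * 1 + 1 = 3 from rfl, Matrix.det_fin_three]
  simp [hQ (n + 1) (by omega), add_comm 1 ℓ, coeff_X_mul]
  ring

lemma coeff_X_pow_mul_of_lt (P : R[X]) {i m : ℕ} (h : m < i) : (X ^ i * P).coeff m = 0 := by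
  rw [coeff_X_pow_mul', if_neg (by omega)]

lemma coeff_X_pow_mul_of_gt (P : R[X]) {i m n : ℕ} (hP : ∀ a > n, P.coeff a = 0)
    (h : n + i < m) : (X ^ i * P).coeff m = 0 := by
  rw [coeff_X_pow_mul', if_pos (by omega), hP _ (by omega)]

lemma coeff_X_pow_mul_of_eq (P : R[X]) {i m n : ℕ} (h : m = n + i) :
    (X ^ i * P).coeff m = P.coeff n := by
  rw [h, coeff_X_pow_mul]

lemma M_step (P Q T : R[X]) (n k ℓ : ℕ) (s : R) 
    (hQ : ∀ i > n, Q.coeff i = 0) (hT : ∀ i ≥ n, T.coeff i = 0)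
    (h : C s * (X * T) = C (-(Q.coeff 0 * Q.coeff n)) * P +
      C (Q.coeff 0 * P.coeff (n + 1)) * (X * Q) + C (Q.coeff n * P.coeff 0) * Q) :
    (Q.coeff 0 * Q.coeff n) ^ (k + 1) * M P Q (n + 1) (k + 1) ℓ =
      s ^ (k + 1) * (Q.coeff 0 * Q.coeff n) * M Q T n k ℓ := by
  set q0 := Q.coeff 0
  set qn := Q.coeff n
  set c : ℕ → ℕ := fun c => if c < k + 1 then c else if c = k + 1 then k + 1 + ℓ
    else n + 1 + (c - (k + 1 + 1)) with hc
  -- first row operation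
  have e1 : dt (2 * (k + 1) + 1) (fun i => if i < k + 2 then X ^ i * Q else
      C s * (X ^ (i - (k + 2) + 1) * T)) c = (-(q0 * qn)) ^ (k + 1) * M P Q (n + 1) (k + 1) ℓ := by
    unfold M
    rw [dt_rowop_lower _ (fun i => if i < k + 1 + 1 then X ^ i * Q else X ^ (i - (k + 1 + 1)) * P) _ _
      (fun i m => if i < k + 2 then (if m = i then 1 else 0) else
        (if m = i then -(q0 * qn) else 0) + (if m = i - (k + 2) + 1 then q0 * P.coeff (n + 1) else 0)
        + (if m = i - (k + 2) then qn * P.coeff 0 else 0))]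
    · congr 1
      rw [show 2 * (k + 1) + 1 = (k + 2) + (k + 1) by ring, Finset.prod_range_add]
      rw [Finset.prod_eq_one, Finset.prod_congr rfl (g := fun _ => -(q0 * qn))]
      · simp
      · intro x hx
        have hx := Finset.mem_range.1 hx
        rw [if_neg (by omega), if_pos rfl, if_neg (by omega), if_neg (by omega)]; ring
      · intro x hx
        have hx := Finset.mem_range.1 hx
        rw [if_pos (by omega), if_pos rfl]
    · intro i hi
      by_cases h1 : i < k + 2
      · have h1' : i < k + 1 + 1 := h1
        simp only [h1, h1', if_true, apply_ite C, ite_mul, C_0, C_1, one_mul, zero_mul,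
          Finset.sum_ite_eq', Finset.mem_range, hi]
      · simp only [h1, if_false, C_add, apply_ite C, add_mul, Finset.sum_add_distrib, ite_mul,
          C_0, zero_mul, Finset.sum_ite_eq', Finset.mem_range]
        have g1 : i - (k + 2) + 1 < 2 * (k + 1) + 1 := by omega
        have g2 : i - (k + 2) < 2 * (k + 1) + 1 := by omega
        have g3 : ¬ i < k + 1 + 1 := h1
        have g4 : i - (k + 2) + 1 < k + 1 + 1 := by omega
        have g5 : i - (k + 2) < k + 1 + 1 := by omega
        simp only [hi, g1, g2, g3, g4, g5, if_true, if_false]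
        have : C s * (X ^ (i - (k + 2) + 1) * T) = X ^ (i - (k + 2)) * (C s * (X * T)) := by ring
        rw [this, h]
        ring
    · intro i m him
      split_ifs <;> first | omega | simp
  have e2 : dt (2 * (k + 1) + 1) (fun i => if i < k + 2 then X ^ i * Q else
      C s * (X ^ (i - (k + 2) + 1) * T)) c = s ^ (k + 1) *
      dt (2 * (k + 1) + 1) (fun i => if i < k + 2 then X ^ i * Q else
      (X ^ (i - (k + 2) + 1) * T)) c := by
    have := dt_smul (2 * (k + 1) + 1) (fun i => if i < k + 2 then X ^ i * Q else
      (X ^ (i - (k + 2) + 1) * T)) c (fun i => if i < k + 2 then 1 else s)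
    rw [show 2 * (k + 1) + 1 = (k + 2) + (k + 1) by ring, Finset.prod_range_add] at this
    rw [Finset.prod_eq_one, Finset.prod_congr rfl (g := fun _ => s)] at this
    · rw [show 2 * (k + 1) + 1 = (k + 2) + (k + 1) by ring]
      simp only [Finset.prod_const, Finset.card_range, one_mul] at this
      rw [← this]
      apply dt_congr _ (fun _ _ => rfl)
      intro i hi
      split_ifs <;> simp
    · intro x hx
      rw [if_neg (by omega)]
    · intro x hx
      have hx := Finset.mem_range.1 hx
      rw [if_pos (by omega)]
  have e3 : dt (2 * (k + 1) + 1) (fun i => if i < k + 2 then X ^ i * Q else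
      (X ^ (i - (k + 2) + 1) * T)) c = q0 * ((-1) ^ (k + 1) * qn * M Q T n k ℓ) := by
    rw [dt_first_col]
    · congr 1
      · simp [c, q0]
      rw [show 2 * (k + 1) = (2 * k + 1) + 1 by ring, dt_last_col _ k (by omega)]
      · congr 1
        · congr 1
          · rw [show k + (2 * k + 1) = 2 * k + (k + 1) by ring, pow_add, pow_mul]; simp
          · rw [if_pos (by omega)]
            apply coeff_X_pow_mul_of_eq
            simp only [c]
            rw [if_neg (by omega), if_neg (by omega)]
            omega
        · -- the rotation
          have hr := dt_rot (2 * k + 1) (2 * k + 1) k le_rfl (by omega) (by omega)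
            (fun i => if i < k + 1 then X ^ i * T else X ^ (i - (k + 1)) * Q)
            (fun c => if c < k then c else if c = k then k + ℓ else n + (c - (k + 1)))
          have h1 : ((-1 : R)) ^ (k * (2 * k + 1 - 1)) = 1 := by
            rw [show k * (2 * k + 1 - 1) = 2 * (k * k) by simp; ring, pow_mul]; simp
          rw [h1, one_mul] at hr
          unfold M
          rw [← hr]
          unfold dt
          congr 1
          ext i m
          have hi := i.2
          simp only [Matrix.of_apply]
          have hcm : c ((m : ℕ) + 1) = (if (m : ℕ) < k then (m : ℕ) else if (m : ℕ) = k then k + ℓ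
              else n + ((m : ℕ) - (k + 1))) + 1 := by
            simp only [c]
            split_ifs <;> omega
          rw [hcm]
          generalize (if (m : ℕ) < k then (m : ℕ) else if (m : ℕ) = k then k + ℓ
              else n + ((m : ℕ) - (k + 1))) = w
          have hcoe : ∀ (a : ℕ) (U : R[X]) (b : ℕ), (X ^ (a + 1) * U).coeff (b + 1) =
            (X ^ a * U).coeff b := by
            intro a U b
            rw [show (X : R[X]) ^ (a + 1) * U = X * (X ^ a * U) by ring, coeff_X_mul]
          by_cases hik : (i : ℕ) < k
          · rw [if_pos hik, if_pos (by omega), if_pos hik, if_neg (by omega), hcoe]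
            congr 3; omega
          · rw [if_neg hik, if_neg (by omega), if_neg hik, if_pos (by omega), if_pos (by omega), hcoe]
            congr 3; omega
      · intro i hi hik
        have hcc : c (2 * k + 1 + 1) = n + 1 + k := by
          simp only [c]
          rw [if_neg (by omega), if_neg (by omega)]
          omega
        simp only [hcc]
        split_ifs with h1
        · exact coeff_X_pow_mul_of_gt Q hQ (by omega)
        · rw [coeff_X_pow_mul', if_pos (by omega), hT _ (by omega)]
    · intro i hi h0
      have hcc : c 0 = 0 := by simp [c]
      rw [hcc]
      split_ifs
      · exact coeff_X_pow_mul_of_lt _ (by omega)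
      · exact coeff_X_pow_mul_of_lt _ (by omega)
  rw [e2, e3] at e1
  have h2 : ((-1 : R) ^ (k + 1)) * (-1) ^ (k + 1) = 1 := by
    rw [← mul_pow]; simp
  rw [neg_pow (q0 * qn)] at e1
  calc (q0 * qn) ^ (k + 1) * M P Q (n + 1) (k + 1) ℓ
      = ((-1 : R) ^ (k + 1) * (-1) ^ (k + 1)) * (q0 * qn) ^ (k + 1) * M P Q (n + 1) (k + 1) ℓ := by
        rw [h2, one_mul]
    _ = (-1 : R) ^ (k + 1) * (s ^ (k + 1) * (q0 * ((-1) ^ (k + 1) * qn * M Q T n k ℓ))) := by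
        rw [e1]; ring
    _ = ((-1 : R) ^ (k + 1) * (-1) ^ (k + 1)) * (s ^ (k + 1) * (q0 * qn) * M Q T n k ℓ) := by ring
    _ = _ := by rw [h2, one_mul]
end

section
variable {R : Type*} [CommRing R]

lemma dt_map {S : Type*} [CommRing S] (φ : R →+* S) (N : ℕ) (r : ℕ → R[X]) (c : ℕ → ℕ) :
    φ (dt N r c) = dt N (fun i => (r i).map φ) c := by
  unfold dt
  rw [RingHom.map_det]
  congr 1
  ext i k
  simp

lemma M_map {S : Type*} [CommRing S] (φ : R →+* S) (P Q : R[X]) (n k ℓ : ℕ) :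
    φ (M P Q n k ℓ) = M (P.map φ) (Q.map φ) n k ℓ := by
  unfold M
  rw [dt_map]
  apply dt_congr _ (fun _ _ => rfl)
  intro i _
  split_ifs <;> simp

lemma sylv_det (A B : R[X]) (d j ℓ : ℕ) : (sylvMat A B d j ℓ).det =
    dt (2 * j) (fun r => if r < j then X ^ r * A else X ^ (r - j) * B)
      (fun c => if c < j - 1 then c else if c = j - 1 then j - 1 + ℓ else d + (c - j)) := rfl

lemma symSubres_map {S : Type*} [CommRing S] (φ : R →+* S) (A B : R[X]) (d j : ℕ) :
    (symSubres A B d j).map φ = symSubres (A.map φ) (B.map φ) d j := by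
  unfold symSubres
  split_ifs with h
  · rfl
  · rw [Polynomial.map_sum]
    refine Finset.sum_congr rfl fun ℓ _ => ?_
    rw [Polynomial.map_mul, map_C, Polynomial.map_pow, map_X, sylv_det, sylv_det, dt_map]
    congr 2
    apply dt_congr _ (fun _ _ => rfl)
    intro i _
    split_ifs <;> simp

lemma sylv_det_zero (A B : R[X]) (d j ℓ : ℕ) (hA : ∀ i > d, A.coeff i = 0)
    (hB : ∀ i > d, B.coeff i = 0) (hj : 1 ≤ j) (hl : d < j + ℓ) :
    (sylvMat A B d j ℓ).det = 0 := by
  by_cases h : j - 1 + ℓ < d + j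
  · apply Matrix.det_zero_of_column_eq (i := (⟨j - 1, by omega⟩ : Fin (2 * j)))
      (j := (⟨j + (j - 1 + ℓ - d), by omega⟩ : Fin (2 * j)))
    · intro hh
      have := congrArg Fin.val hh
      simp only at this
      omega
    · intro i
      unfold sylvMat
      have g1 : ¬ j + (j - 1 + ℓ - d) < j - 1 := by omega
      have g2 : ¬ j + (j - 1 + ℓ - d) = j - 1 := by omega
      simp only [lt_irrefl, if_false, if_true, g1, g2]
      congr 1
      omega
  · apply Matrix.det_eq_zero_of_column_eq_zero (⟨j - 1, by omega⟩ : Fin (2 * j))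
    intro i
    have hi := i.2
    unfold sylvMat
    simp only [lt_irrefl, if_false, if_true]
    split_ifs
    · exact coeff_X_pow_mul_of_gt A hA (by omega)
    · exact coeff_X_pow_mul_of_gt B hB (by omega)

lemma symSubres_coeff (A B : R[X]) (d j ℓ : ℕ) (hA : ∀ i > d, A.coeff i = 0)
    (hB : ∀ i > d, B.coeff i = 0) (hj : 1 ≤ j) :
    (symSubres A B d j).coeff ℓ = (sylvMat A B d j ℓ).det := by
  unfold symSubres
  rw [if_neg (by omega)]
  simp only [finsetSum_coeff, coeff_C_mul, coeff_X_pow, mul_ite, mul_one, mul_zero]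
  rw [Finset.sum_ite_eq]
  split_ifs with h
  · rfl
  · rw [sylv_det_zero A B d j ℓ hA hB hj]
    simp only [Finset.mem_range] at h
    omega

lemma symSubres_coeff_zero (A B : R[X]) (d j ℓ : ℕ) (hA : ∀ i > d, A.coeff i = 0)
    (hB : ∀ i > d, B.coeff i = 0) (hl : d < j + ℓ) :
    (symSubres A B d j).coeff ℓ = 0 := by
  rcases Nat.eq_zero_or_pos j with h | h
  · subst h
    simp only [symSubres, if_true]
    exact hB _ (by omega)
  · rw [symSubres_coeff A B d j ℓ hA hB h, sylv_det_zero A B d j ℓ hA hB h hl]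

lemma symSubres_one (A B : R[X]) (d : ℕ) (hA : ∀ i > d, A.coeff i = 0)
    (hB : ∀ i > d, B.coeff i = 0) :
    symSubres A B d 1 = C (B.coeff d) * A - C (A.coeff d) * B := by
  ext ℓ
  rw [symSubres_coeff A B d 1 ℓ hA hB le_rfl]
  rw [show (sylvMat A B d 1 ℓ).det = Matrix.det (n := Fin 2) (sylvMat A B d 1 ℓ) from rfl,
    Matrix.det_fin_two]
  simp [sylvMat]
  ring

lemma base_step (A B : R[X]) (d k ℓ : ℕ) (hA : ∀ i > d, A.coeff i = 0)
    (hB : ∀ i > d, B.coeff i = 0) :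
    B.coeff d ^ (k + 1) * (symSubres A B d (k + 1)).coeff ℓ =
      B.coeff d * M B (symSubres A B d 1) d k ℓ := by
  rw [symSubres_coeff A B d (k + 1) ℓ hA hB (by omega), sylv_det]
  set T := symSubres A B d 1 with hTdef
  have hT : T = C (B.coeff d) * A - C (A.coeff d) * B := symSubres_one A B d hA hB
  set c : ℕ → ℕ := (fun c => if c < k + 1 - 1 then c else if c = k + 1 - 1 then k + 1 - 1 + ℓ
    else d + (c - (k + 1))) with hc
  have e1 : dt (2 * (k + 1)) (fun i => if i < k + 1 then X ^ i * T else X ^ (i - (k + 1)) * B) c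
      = B.coeff d ^ (k + 1) * dt (2 * (k + 1))
        (fun r => if r < k + 1 then X ^ r * A else X ^ (r - (k + 1)) * B) c := by
    rw [dt_rowop_upper _ (fun r => if r < k + 1 then X ^ r * A else X ^ (r - (k + 1)) * B) _ _
      (fun i m => if i < k + 1 then (if m = i then B.coeff d else 0) +
        (if m = i + (k + 1) then - A.coeff d else 0) else (if m = i then 1 else 0))]
    · congr 1
      rw [show 2 * (k + 1) = (k + 1) + (k + 1) by ring, Finset.prod_range_add, mul_comm]
      rw [Finset.prod_eq_one, Finset.prod_congr rfl (g := fun _ => B.coeff d)]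
      · simp
      · intro x hx
        have hx := Finset.mem_range.1 hx
        rw [if_pos (by omega), if_pos rfl, if_neg (by omega)]; ring
      · intro x hx
        have hx := Finset.mem_range.1 hx
        rw [if_neg (by omega), if_pos rfl]
    · intro i hi
      by_cases h1 : i < k + 1
      · have g1 : i + (k + 1) < 2 * (k + 1) := by omega
        have g2 : ¬ i + (k + 1) < k + 1 := by omega
        simp only [h1, if_true, C_add, apply_ite C, add_mul, Finset.sum_add_distrib, ite_mul,
          C_0, zero_mul, Finset.sum_ite_eq', Finset.mem_range, hi, g1, g2, if_false,
          Nat.add_sub_cancel, hT, C_neg]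
        ring
      · simp only [h1, if_false, apply_ite C, ite_mul, C_0, C_1, one_mul, zero_mul,
          Finset.sum_ite_eq', Finset.mem_range, hi, if_true]
    · intro i m him
      split_ifs <;> first | omega | simp
  rw [← e1, show 2 * (k + 1) = (2 * k + 1) + 1 by ring, dt_last_col _ (2 * k + 1) le_rfl]
  · have hcc : c (2 * k + 1) = d + k := by
      simp only [c]
      rw [if_neg (by omega), if_neg (by omega)]
      omega
    rw [if_neg (by omega), hcc, coeff_X_pow_mul_of_eq B (n := d) (by omega), ← two_mul, pow_mul]
    simp only [even_two, Even.neg_pow, one_pow, one_mul]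
    congr 1
    unfold M
    apply dt_congr
    · intro i hi
      rw [if_pos hi]
    · intro i hi
      simp only [c, Nat.add_sub_cancel]
  · have hcc : c (2 * k + 1) = d + k := by
      simp only [c]
      rw [if_neg (by omega), if_neg (by omega)]
      omega
    intro i hi hne
    simp only [hcc]
    split_ifs with h
    · rw [coeff_X_pow_mul', if_pos (by omega)]
      exact symSubres_coeff_zero A B d 1 _ hA hB (by omega)
    · exact coeff_X_pow_mul_of_gt B hB (by omega)

/-- the scaling factor -/
noncomputable def sc (A B : R[X]) (d j : ℕ) : R :=
  if j = 0 then B.coeff d else (symSubres A B d j).coeff 0 * (symSubres A B d j).coeff (d - j)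

lemma main_domain [IsDomain R] (A B : R[X]) (d : ℕ) (hA : ∀ i > d, A.coeff i = 0)
    (hB : ∀ i > d, B.coeff i = 0) (hs : ∀ j ≤ d, sc A B d j ≠ 0) (j : ℕ) (hj : j ≤ d) (k ℓ : ℕ) :
    M (symSubres A B d j) (symSubres A B d (j + 1)) (d - j) k ℓ =
      sc A B d j ^ k * (symSubres A B d (j + k + 1)).coeff ℓ := by
  induction j generalizing k ℓ with
  | zero =>
    have h0 := hs 0 hj
    have h := base_step A B d k ℓ hA hB
    have hS : symSubres A B d 0 = B := by simp [symSubres]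
    simp only [sc, if_true] at h0 ⊢
    rw [hS, Nat.sub_zero, zero_add, zero_add]
    apply mul_left_cancel₀ h0
    rw [← h]
    ring
  | succ j ih =>
    obtain ⟨n, hn⟩ : ∃ n, d - j = n + 1 := ⟨d - j - 1, by omega⟩
    have hn' : d - (j + 1) = n := by omega
    have ih := ih (by omega)
    rw [hn] at ih
    have hsj := hs j (by omega)
    have hsj1 := hs (j + 1) hj
    rw [hn']
    have hq : sc A B d (j + 1) = (symSubres A B d (j + 1)).coeff 0 *
      (symSubres A B d (j + 1)).coeff n := by simp [sc, hn']
    have hQ : ∀ i > n, (symSubres A B d (j + 1)).coeff i = 0 := fun i hi =>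
      symSubres_coeff_zero A B d _ _ hA hB (by omega)
    have hT : ∀ i ≥ n, (symSubres A B d (j + 1 + 1)).coeff i = 0 := fun i hi =>
      symSubres_coeff_zero A B d _ _ hA hB (by omega)
    have hstep := M_step (symSubres A B d j) (symSubres A B d (j + 1)) (symSubres A B d (j + 1 + 1))
      n k ℓ (sc A B d j) hQ hT (by
        ext m
        rcases m with _ | m
        · simp; ring
        · have := ih 1 m
          rw [M_one _ _ _ _ hQ, pow_one] at this
          simp only [coeff_C_mul, coeff_X_mul, coeff_add]
          rw [← this])
    rw [← hq, ih (k + 1) ℓ] at hstep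
    apply mul_left_cancel₀ hsj1
    apply mul_left_cancel₀ (pow_ne_zero (k + 1) hsj)
    rw [← mul_assoc, ← hstep, show j + (k + 1) + 1 = j + 1 + k + 1 by ring]
    ring

lemma witness (d j ℓ : ℕ) (hj : 1 ≤ j) (hjd : j ≤ d) (hl : ℓ = 0 ∨ ℓ = d - j) :
    (sylvMat (X ^ d : ℤ[X]) (1 + X ^ (d - j)) d j ℓ).det ≠ 0 := by
  rw [sylv_det]
  set B : ℤ[X] := 1 + X ^ (d - j) with hBdef
  have hB0 : B.coeff 0 ≠ 0 := by
    simp only [B, coeff_add, coeff_one_zero, coeff_X_pow]; split_ifs <;> norm_num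
  have hBl : B.coeff ℓ ≠ 0 := by
    simp only [B, coeff_add, coeff_one, coeff_X_pow]; split_ifs <;> first | omega | simp
  have hr := dt_rot (2 * j) (2 * j) j le_rfl (by omega) (by omega)
    (fun r => if r < j then X ^ r * (X ^ d : ℤ[X]) else X ^ (r - j) * B)
    (fun c => if c < j - 1 then c else if c = j - 1 then j - 1 + ℓ else d + (c - j))
  intro h0
  rw [h0, mul_zero] at hr
  unfold dt at hr
  rw [Matrix.det_of_isUpperTriangular, Finset.prod_eq_zero_iff] at hr
  · obtain ⟨i, -, hi⟩ := hr
    have hi2 := i.2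
    simp only [Matrix.of_apply] at hi
    by_cases h1 : (i : ℕ) < j
    · rw [if_pos h1, if_neg (by omega)] at hi
      by_cases h2 : (i : ℕ) < j - 1
      · rw [if_pos h2, coeff_X_pow_mul_of_eq B (n := 0) (by omega)] at hi
        exact hB0 hi
      · rw [if_neg h2, if_pos (by omega), coeff_X_pow_mul_of_eq B (n := ℓ) (by omega)] at hi
        exact hBl hi
    · rw [if_neg h1, if_pos hi2, if_pos (by omega), if_neg (by omega), if_neg (by omega),
        ← pow_add, coeff_X_pow, if_pos (by omega)] at hi
      exact one_ne_zero hi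
  · intro i m him
    have him : (m : ℕ) < i := him
    have hi2 := i.2
    simp only [Matrix.of_apply]
    by_cases h1 : (i : ℕ) < j
    · rw [if_pos h1, if_neg (by omega), if_pos (by omega)]
      exact coeff_X_pow_mul_of_lt _ (by omega)
    · rw [if_neg h1, if_pos hi2, if_pos (by omega), ← pow_add, coeff_X_pow, if_neg]
      split_ifs <;> omega

/-- the generic polynomial -/
noncomputable def gen (d : ℕ) (b : Bool) : (MvPolynomial (Bool × ℕ) ℤ)[X] :=
  ∑ i ∈ Finset.range (d + 1), C (MvPolynomial.X (b, i)) * X ^ i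

lemma gen_coeff (d : ℕ) (b : Bool) (i : ℕ) :
    (gen d b).coeff i = if i ≤ d then MvPolynomial.X (b, i) else 0 := by
  unfold gen
  simp only [finsetSum_coeff, coeff_C_mul, coeff_X_pow, mul_ite, mul_one, mul_zero]
  rw [Finset.sum_ite_eq]
  simp [Nat.lt_succ_iff]

lemma gen_map (d : ℕ) (b : Bool) (P : Bool → R[X]) (hP : ∀ i > d, (P b).coeff i = 0) :
    (gen d b).map (MvPolynomial.eval₂Hom (Int.castRingHom R) (fun x => (P x.1).coeff x.2)) = P b := by
  ext i
  rw [coeff_map, gen_coeff]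
  split_ifs with h
  · simp
  · rw [hP i (by omega)]; simp

lemma gen_sc (d j : ℕ) (hj : j ≤ d) : sc (gen d false) (gen d true) d j ≠ 0 := by
  unfold sc
  split_ifs with h
  · rw [gen_coeff, if_pos le_rfl]
    exact MvPolynomial.X_ne_zero _
  · have key : ∀ ℓ, (ℓ = 0 ∨ ℓ = d - j) →
        (symSubres (gen d false) (gen d true) d j).coeff ℓ ≠ 0 := by
      intro ℓ hl h0
      set P : Bool → ℤ[X] := fun b => if b then (1 + X ^ (d - j)) else X ^ d with hP
      have hP1 : ∀ i > d, (P false).coeff i = 0 := by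
        intro i hi
        simp [P, coeff_X_pow]; omega
      have hP2 : ∀ i > d, (P true).coeff i = 0 := by
        intro i hi
        simp only [P, if_true, coeff_add, coeff_one, coeff_X_pow]
        rw [if_neg (by omega), if_neg (by omega)]; rfl
      have h1 := congrArg
        (MvPolynomial.eval₂Hom (Int.castRingHom ℤ) (fun x => (P x.1).coeff x.2)) h0
      rw [← coeff_map, symSubres_map, gen_map d _ P hP1, gen_map d _ P hP2, map_zero,
        symSubres_coeff _ _ _ _ _ hP1 hP2 (by omega)] at h1
      exact witness d j ℓ (by omega) hj hl h1
    exact mul_ne_zero (key _ (Or.inl rfl)) (key _ (Or.inr rfl))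

theorem main_ring (A B : R[X]) (d : ℕ) (hA : ∀ i > d, A.coeff i = 0)
    (hB : ∀ i > d, B.coeff i = 0) (j : ℕ) (hj : j ≤ d) (k ℓ : ℕ) :
    M (symSubres A B d j) (symSubres A B d (j + 1)) (d - j) k ℓ =
      sc A B d j ^ k * (symSubres A B d (j + k + 1)).coeff ℓ := by
  have h := main_domain (gen d false) (gen d true) d
    (fun i hi => by rw [gen_coeff, if_neg (by omega)])
    (fun i hi => by rw [gen_coeff, if_neg (by omega)]) (fun j hj => gen_sc d j hj) j hj k ℓ
  set P : Bool → R[X] := fun b => if b then B else A with hP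
  have h1 := congrArg
        (MvPolynomial.eval₂Hom (Int.castRingHom R) (fun x => (P x.1).coeff x.2)) h
  have gA := gen_map d false P hA
  have gB := gen_map d true P hB
  rw [M_map, map_mul, map_pow, ← coeff_map, symSubres_map, symSubres_map, symSubres_map, gA, gB] at h1
  have h2 : (MvPolynomial.eval₂Hom (Int.castRingHom R) (fun x => (P x.1).coeff x.2))
      (sc (gen d false) (gen d true) d j) = sc (P false) (P true) d j := by
    unfold sc
    split_ifs
    · rw [← coeff_map, gB]
    · rw [map_mul, ← coeff_map, ← coeff_map, symSubres_map, gA, gB]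
  rw [h2] at h1
  exact h1

lemma det_tri {N : ℕ} (W : Matrix (Fin N) (Fin N) R) (b : ℕ → ℕ)
    (hb : ∀ i < N, ∀ k < N, b i = b k → i = k)
    (h : ∀ i k : Fin N, b i < b k → W i k = 0) : W.det = ∏ i, W i i := by
  rw [Matrix.det_apply, Finset.sum_eq_single 1]
  · simp
  · intro σ _ hσ
    have : ∃ i, b (σ i) < b i := by
      by_contra hcon
      push Not at hcon
      apply hσ
      have hsum : ∑ i, b (σ i) = ∑ i : Fin N, b i := Equiv.sum_comp σ (fun i : Fin N => b i)
      have h2 := (Finset.sum_eq_sum_iff_of_le (fun i _ => hcon i)).1 hsum.symm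
      ext i
      have := hb _ i.2 _ (σ i).2 (h2 i (Finset.mem_univ _))
      simp [this.symm]
    obtain ⟨i, hi⟩ := this
    have h3 : ∏ i, W (σ i) i = 0 := Finset.prod_eq_zero (Finset.mem_univ i) (h _ _ hi)
    rw [h3, smul_zero]
  · simp

lemma M_tri (P Q : R[X]) (n a b ℓ : ℕ) (hP : ∀ i > n, P.coeff i = 0)
    (hQl : ∀ i < a, Q.coeff i = 0) (hQh : ∀ i, n < i + (b + 1) → Q.coeff i = 0)
    (hn : a + (b + 1) ≤ n) :
    M P Q n (a + b) ℓ = (-1) ^ ((a + (b + 1)) * a) * (P.coeff 0 ^ a * P.coeff n ^ b *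
      Q.coeff a ^ b * Q.coeff (n - (b + 1)) ^ a * Q.coeff (a + ℓ)) := by
  set k := a + b with hk
  set c : ℕ → ℕ := (fun c => if c < k then c else if c = k then k + ℓ else n + (c - (k + 1))) with hc
  set r : ℕ → R[X] := (fun i => if i < k + 1 then X ^ i * Q else X ^ (i - (k + 1)) * P) with hrdef
  have hr := dt_rot (2 * k + 1) (k + 1 + a) a (by omega) (by omega) (by omega) r c
  have hsgn : ((-1 : R)) ^ (a * (k + 1 + a - 1)) = (-1) ^ ((a + (b + 1)) * a) := by
    have h1 : a * (k + 1 + a - 1) + 2 * a = (a + (b + 1)) * a + a * (a + 1) := by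
      rw [show k + 1 + a - 1 = k + a by omega, hk]; ring
    have h2 : Even (a * (a + 1)) := Nat.even_mul_succ_self a
    have h3 : ((-1 : R)) ^ (a * (k + 1 + a - 1) + 2 * a) = (-1) ^ (a * (k + 1 + a - 1)) := by
      rw [pow_add, pow_mul _ 2]; simp
    rw [← h3, h1, pow_add, h2.neg_one_pow, mul_one]
  have hsq : ((-1 : R)) ^ ((a + (b + 1)) * a) * (-1) ^ ((a + (b + 1)) * a) = 1 := by
    rw [← mul_pow]; simp
  have hM : M P Q n k ℓ = (-1) ^ ((a + (b + 1)) * a) * dt (2 * k + 1) (fun i => if i < a then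
      r (k + 1 + a - a + i) else if i < k + 1 + a then r (i - a) else r i) c := by
    rw [hr, hsgn, ← mul_assoc, hsq, one_mul]
    rfl
  rw [hM]
  congr 1
  have hrow : dt (2 * k + 1) (fun i => if i < a then
      r (k + 1 + a - a + i) else if i < k + 1 + a then r (i - a) else r i) c =
      dt (2 * k + 1) (fun i => if i < a then X ^ i * P else if i < k + 1 + a then X ^ (i - a) * Q
        else X ^ (i - (k + 1)) * P) c := by
    apply dt_congr _ (fun _ _ => rfl)
    intro i hi
    simp only [r]
    split_ifs <;> first | omega | rfl | (congr 2; omega)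
  rw [hrow]
  unfold dt
  rw [det_tri _ (fun p => if p < a then 10 * k + 10 - p else if p ≤ k then 2 * (k - p)
    else if p < k + 1 + a then 2 * (p - k) - 1 else 10 * k + 10 + p)]
  · simp only [Matrix.of_apply]
    refine Eq.trans (Fin.prod_univ_eq_prod_range (fun i => (if i < a then X ^ i * P else
      if i < k + 1 + a then X ^ (i - a) * Q else X ^ (i - (k + 1)) * P).coeff (c i)) (2 * k + 1)) ?_
    rw [show 2 * k + 1 = a + b + 1 + a + b by omega, Finset.prod_range_add, Finset.prod_range_add,
      Finset.prod_range_add, Finset.prod_range_add]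
    have pc : ∀ (N : ℕ) (f : ℕ → R) (v : R), (∀ i < N, f i = v) →
        ∏ i ∈ Finset.range N, f i = v ^ N := by
      intro N f v hf
      rw [Finset.prod_congr rfl (fun i hi => hf i (Finset.mem_range.1 hi))]
      simp
    refine (congrArg₂ (· * ·) (congrArg₂ (· * ·) (congrArg₂ (· * ·) (congrArg₂ (· * ·)
      (pc a _ (P.coeff 0) ?_) (pc b _ (Q.coeff a) ?_)) (pc 1 _ (Q.coeff (a + ℓ)) ?_))
      (pc a _ (Q.coeff (n - (b + 1))) ?_)) (pc b _ (P.coeff n) ?_)).trans ?_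
    · intro i hi
      simp only [c]
      split_ifs <;> first | omega | (exact coeff_X_pow_mul_of_eq _ (by omega))
    · intro i hi
      simp only [c]
      split_ifs <;> first | omega | (exact coeff_X_pow_mul_of_eq _ (by omega))
    · intro i hi
      simp only [c]
      split_ifs <;> first | omega | (exact coeff_X_pow_mul_of_eq _ (by omega))
    · intro i hi
      simp only [c]
      split_ifs <;> first | omega | (exact coeff_X_pow_mul_of_eq _ (by omega))
    · intro i hi
      simp only [c]
      split_ifs <;> first | omega | (exact coeff_X_pow_mul_of_eq _ (by omega))
    · simp only [pow_one]
      ring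
  · intro i hi m hm h
    split_ifs at h <;> omega
  · intro i m him
    have hi := i.2
    have hm := m.2
    simp only [Matrix.of_apply, c]
    generalize (i : ℕ) = i at *
    generalize (m : ℕ) = m at *
    by_cases h1 : i < a
    · rw [if_pos h1] at him ⊢
      split_ifs at him ⊢ <;> first | omega | exact coeff_X_pow_mul_of_lt _ (by omega) |
        exact coeff_X_pow_mul_of_gt _ hP (by omega)
    · by_cases h2 : i < k + 1 + a
      · rw [if_neg h1, if_pos h2, coeff_X_pow_mul']
        rw [if_neg h1] at him
        split_ifs at him ⊢ <;> first | omega | rfl | exact hQl _ (by omega) |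
          exact hQh _ (by omega)
      · rw [if_neg h1, if_neg h2]
        rw [if_neg h1, if_neg (by omega), if_neg h2] at him
        split_ifs at him ⊢ <;> first | omega | exact coeff_X_pow_mul_of_lt _ (by omega) |
          exact coeff_X_pow_mul_of_gt _ hP (by omega)

lemma divX_coeff (Q : R[X]) (a ℓ : ℕ) (hQl : ∀ i < a, Q.coeff i = 0) :
    (Q /ₘ X ^ a).coeff ℓ = Q.coeff (a + ℓ) := by
  obtain ⟨T, hT⟩ := X_pow_dvd_iff.2 hQl
  rw [hT, mul_divByMonic_cancel_left _ (monic_X_pow a), add_comm, coeff_X_pow_mul]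
end

end SymSub

/-- Structure theorem, part 2: if `(S_j, S_{j+1})` is `(α,β)`-defective, then
`lc(S_j)^α · S_j(0)^{β-1} · S_{j+α+β} =
  (-1)^{(α+β)α} · lc(S_{j+1})^α · tc(S_{j+1})^{β-1} · (S_{j+1}/X^α)` when `j > 0`, and
`b_d^α · S_{α+β} = (-1)^{(α+β)α} · b_0^α · lc(S_1)^α · tc(S_1)^{β-1} · (S_1/X^α)`
when `j = 0`. -/
theorem structure_theorem_jump (D : Subring ℂ) (A B : Polynomial D) (d j α β : ℕ)
    (hAdeg : A.degree = (d : ℕ)) (hBdeg : B.degree = (d : ℕ))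
    (hAval : A.coeff 0 ≠ 0) (hBval : B.coeff 0 ≠ 0)
    (hdef : IsDefective A B d j α β) :
    (0 < j →
      C ((symSubres A B d j).leadingCoeff ^ α * ((symSubres A B d j).coeff 0) ^ (β - 1)) *
          symSubres A B d (j + α + β) =
        C ((-1 : D) ^ ((α + β) * α) * (symSubres A B d (j + 1)).leadingCoeff ^ α *
            (symSubres A B d (j + 1)).trailingCoeff ^ (β - 1)) *
          (symSubres A B d (j + 1) /ₘ X ^ α)) ∧
    (j = 0 →
      C (B.coeff d ^ α) * symSubres A B d (α + β) =
        C ((-1 : D) ^ ((α + β) * α) * (B.coeff 0) ^ α *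
            (symSubres A B d 1).leadingCoeff ^ α *
            (symSubres A B d 1).trailingCoeff ^ (β - 1)) *
          (symSubres A B d 1 /ₘ X ^ α)) := by
  obtain ⟨h0, hdeg, hne, hval, hdeg'⟩ := hdef
  have hA : ∀ i > d, A.coeff i = 0 := fun i hi => coeff_eq_zero_of_degree_lt (by
    rw [hAdeg]; exact_mod_cast hi)
  have hB : ∀ i > d, B.coeff i = 0 := fun i hi => coeff_eq_zero_of_degree_lt (by
    rw [hBdeg]; exact_mod_cast hi)
  have hlc' : (symSubres A B d (j + 1)).leadingCoeff ≠ 0 := leadingCoeff_ne_zero.2 hne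
  have hβ : 1 ≤ β := by
    by_contra hcon
    exact hlc' (SymSub.symSubres_coeff_zero A B d (j + 1) _ hA hB (by omega))
  obtain ⟨b, rfl⟩ : ∃ b, β = b + 1 := ⟨β - 1, by omega⟩
  have hle : (symSubres A B d (j + 1)).natTrailingDegree ≤ (symSubres A B d (j + 1)).natDegree :=
    natTrailingDegree_le_natDegree _
  have hP : ∀ i > d - j, (symSubres A B d j).coeff i = 0 := fun i hi =>
    coeff_eq_zero_of_natDegree_lt (by omega)
  have hQl : ∀ i < α, (symSubres A B d (j + 1)).coeff i = 0 := fun i hi =>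
    coeff_eq_zero_of_lt_natTrailingDegree (by omega)
  have hQh : ∀ i, d - j < i + (b + 1) → (symSubres A B d (j + 1)).coeff i = 0 := fun i hi =>
    coeff_eq_zero_of_natDegree_lt (by omega)
  have hlcP : (symSubres A B d j).leadingCoeff = (symSubres A B d j).coeff (d - j) := by
    rw [leadingCoeff]; congr 1; omega
  have hPne : (symSubres A B d j).coeff (d - j) ≠ 0 := by
    rw [← hlcP, leadingCoeff_ne_zero]
    intro h
    rw [h] at h0
    exact h0 (coeff_zero 0)
  have hlcQ : (symSubres A B d (j + 1)).leadingCoeff =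
      (symSubres A B d (j + 1)).coeff (d - j - (b + 1)) := by
    rw [leadingCoeff]; congr 1; omega
  have htcQ : (symSubres A B d (j + 1)).trailingCoeff = (symSubres A B d (j + 1)).coeff α := by
    rw [trailingCoeff, hval]
  have key : ∀ ℓ, SymSub.sc A B d j ^ (α + b) * (symSubres A B d (j + (α + b) + 1)).coeff ℓ = _ :=
    fun ℓ => (SymSub.main_ring A B d hA hB j (by omega) (α + b) ℓ).symm.trans
      (SymSub.M_tri _ _ (d - j) α b ℓ hP hQl hQh (by omega))
  constructor
  · intro hj
    ext1 ℓ
    rw [coeff_C_mul, coeff_C_mul, SymSub.divX_coeff _ _ _ hQl, hlcP, hlcQ, htcQ,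
      Nat.add_sub_cancel]
    have hk := key ℓ
    rw [SymSub.sc, if_neg (by omega), show j + (α + b) + 1 = j + α + (b + 1) by ring] at hk
    apply mul_left_cancel₀ (pow_ne_zero α h0)
    apply mul_left_cancel₀ (pow_ne_zero b hPne)
    linear_combination hk
  · intro hj
    subst hj
    have hS : symSubres A B d 0 = B := by simp [symSubres]
    rw [hS, Nat.sub_zero] at hPne
    ext1 ℓ
    rw [Nat.zero_add] at hQl hlcQ htcQ
    rw [coeff_C_mul, coeff_C_mul, SymSub.divX_coeff _ _ _ hQl, hlcQ, htcQ,
      Nat.add_sub_cancel]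
    have hk := key ℓ
    rw [SymSub.sc, if_pos rfl, show 0 + (α + b) + 1 = α + (b + 1) by ring, hS] at hk
    simp only [Nat.zero_add, Nat.sub_zero] at hk ⊢
    apply mul_left_cancel₀ (pow_ne_zero b hPne)
    linear_combination hk
end

section
/- Let A, B ∈ D[X] have the same degree d and valuation 0, let (S_i)_{−1 ≤ i ≤ d} be their sequence of symmetric subresultants, let j ∈ {1, …, d−1} be such that (S_j, S_{j+1}) is (α,β)-defective, and put k = j+α+β. Then the symmetric quotient of lc(S_{j+1})·S_k(0)·S_j by S_{j+1} belongs to D[X], and so does the symmetric remainder. -/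
open Polynomial

namespace SymAux

/-- The polynomial in row `r` of the Sylvester-type matrix of size `2(n+1)`. -/
noncomputable def rowPoly {R : Type*} [CommRing R] (A B : R[X]) (n r : ℕ) : R[X] :=
  if r < n + 1 then X ^ r * A else X ^ (r - (n + 1)) * B

/-- Index of the variable column. -/
def col0 (n : ℕ) : Fin (2 * (n + 1)) := ⟨n, by omega⟩

/-- The minor whose variable column has degree `m`. -/
noncomputable def gdet {R : Type*} [CommRing R] (A B : R[X]) (d n m : ℕ) : R :=
  ((sylvMat A B d (n + 1) 0).updateCol (col0 n)
    (fun r => (rowPoly A B n (r : ℕ)).coeff m)).det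

theorem gdet_eq {R : Type*} [CommRing R] (A B : R[X]) (d n l : ℕ) :
    gdet A B d n (n + l) = (sylvMat A B d (n + 1) l).det := by
  unfold gdet
  congr 1
  ext r c
  rw [Matrix.updateCol_apply]
  by_cases hc : c = col0 n
  · subst hc
    simp [sylvMat, rowPoly, col0]
  · have hc' : (c : ℕ) ≠ n := fun h => hc (Fin.ext h)
    simp [sylvMat, hc, hc']

theorem gdet_zero {R : Type*} [CommRing R] (A B : R[X]) (d n m : ℕ)
    (hA : A.natDegree ≤ d) (hB : B.natDegree ≤ d) (hm : m < n ∨ d ≤ m) :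
    gdet A B d n m = 0 := by
  unfold gdet
  by_cases hbig : d + n < m
  · apply Matrix.det_eq_zero_of_column_eq_zero (col0 n)
    intro r
    rw [Matrix.updateCol_self]
    apply coeff_eq_zero_of_natDegree_lt
    have hr := r.2
    unfold rowPoly
    split_ifs with h
    · refine lt_of_le_of_lt (natDegree_mul_le.trans (add_le_add (natDegree_X_pow_le _) hA)) ?_
      omega
    · refine lt_of_le_of_lt (natDegree_mul_le.trans (add_le_add (natDegree_X_pow_le _) hB)) ?_
      omega
  · have key : ∃ c' : Fin (2 * (n + 1)), c' ≠ col0 n ∧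
        ∀ r, sylvMat A B d (n + 1) 0 r c' = (rowPoly A B n (r : ℕ)).coeff m := by
      by_cases h1 : m < n
      · refine ⟨⟨m, by omega⟩, ?_, ?_⟩
        · intro h
          have := congrArg Fin.val h
          simp [col0] at this
          omega
        · intro r
          simp [sylvMat, rowPoly, h1]
      · refine ⟨⟨n + 1 + (m - d), by omega⟩, ?_, ?_⟩
        · intro h
          have := congrArg Fin.val h
          simp [col0] at this
          omega
        · intro r
          have e1 : ¬ (n + 1 + (m - d) < n) := by omega
          have e2 : ¬ (n + 1 + (m - d) = n) := by omega
          have e3 : d + (n + 1 + (m - d) - (n + 1)) = m := by omega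
          simp only [sylvMat, rowPoly, Nat.add_sub_cancel, e1, e2, e3, if_false]
    obtain ⟨c', hne, hc'⟩ := key
    apply Matrix.det_zero_of_column_eq hne
    intro r
    rw [Matrix.updateCol_self, Matrix.updateCol_ne hne, hc']

theorem last_cof {R : Type*} [CommRing R] (A B : R[X]) (d n : ℕ)
    (hA : A.natDegree ≤ d) (hB : B.natDegree ≤ d) (hn : 1 ≤ n) :
    ∃ s : R, s * s = 1 ∧
      (sylvMat A B d (n + 1) 0).adjugate (col0 n) (Fin.last (2 * n + 1)) =
        s * (A.coeff d * (sylvMat A B d n 0).det) := by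
  have h1 := Matrix.adjugate_fin_succ_eq_det_submatrix (n := 2 * n + 1)
    (sylvMat A B d (n + 1) 0) (col0 n) (Fin.last (2 * n + 1))
  rw [h1]
  set N := (sylvMat A B d (n + 1) 0) with hN
  let M : Matrix (Fin (2 * n + 1)) (Fin (2 * n + 1)) R :=
    Matrix.submatrix (n := Fin (2 * n + 1 + 1)) (m := Fin (2 * n + 1 + 1)) N
      (Fin.last (2 * n + 1)).succAbove (Fin.succAbove (n := 2 * n + 1) (col0 n))
  have hcol : ∀ c : Fin (2 * n + 1),
      ((Fin.succAbove (n := 2 * n + 1) (col0 n) c : Fin (2 * n + 1 + 1)) : ℕ) =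
        if (c : ℕ) < n then (c : ℕ) else c + 1 := by
    intro c
    simp only [Fin.succAbove, Fin.lt_def, col0, Fin.val_castSucc]
    split_ifs <;> simp
  have hM : ∀ r c : Fin (2 * n + 1), M r c = (rowPoly A B n (r : ℕ)).coeff
      (if (c : ℕ) < n then (c : ℕ) else d + ((c : ℕ) - n)) := by
    intro r c
    simp only [M, Matrix.submatrix_apply, hN, sylvMat, rowPoly, hcol, Fin.succAbove_last,
      Fin.val_castSucc]
    congr 1
    split_ifs <;> omega
  have hdet : M.det = (-1) ^ (n + 2 * n) * (A.coeff d * (sylvMat A B d n 0).det) := by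
    rw [Matrix.det_succ_column M (Fin.last (2 * n))]
    rw [Finset.sum_eq_single (⟨n, by omega⟩ : Fin (2 * n + 1))]
    · have e1 : M ⟨n, by omega⟩ (Fin.last (2 * n)) = A.coeff d := by
        rw [hM]
        have : ¬ (2 * n < n) := by omega
        have e : d + (2 * n - n) = d + n := by omega
        simp [rowPoly, this, e, coeff_X_pow_mul]
      have e2 : M.submatrix (Fin.succAbove ⟨n, by omega⟩) (Fin.last (2 * n)).succAbove =
          sylvMat A B d n 0 := by
        ext r c
        have hrow : ((Fin.succAbove (⟨n, by omega⟩ : Fin (2 * n + 1)) r : Fin (2 * n + 1)) : ℕ) =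
            if (r : ℕ) < n then (r : ℕ) else r + 1 := by
          simp only [Fin.succAbove, Fin.lt_def, Fin.val_castSucc]
          split_ifs <;> simp
        rw [Matrix.submatrix_apply, hM, hrow, Fin.succAbove_last, Fin.val_castSucc]
        unfold sylvMat rowPoly
        congr 1
        · by_cases h : (r : ℕ) < n
          · simp [h, Nat.lt_succ_of_lt h]
          · have : ¬ ((r : ℕ) + 1 < n + 1) := by omega
            simp [h]
        · split_ifs <;> omega
      rw [e1, e2]
      simp [mul_assoc]
    · intro r _ hr
      have hr' : (r : ℕ) ≠ n := fun h => hr (Fin.ext h)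
      have hr2 := r.2
      have : M r (Fin.last (2 * n)) = 0 := by
        rw [hM]
        apply coeff_eq_zero_of_natDegree_lt
        have e : ¬ (2 * n < n) := by omega
        simp only [Fin.val_last, e, if_false]
        unfold rowPoly
        split_ifs with h
        · refine lt_of_le_of_lt
            (natDegree_mul_le.trans (add_le_add (natDegree_X_pow_le _) hA)) ?_
          omega
        · refine lt_of_le_of_lt
            (natDegree_mul_le.trans (add_le_add (natDegree_X_pow_le _) hB)) ?_
          omega
      rw [this]
      ring
    · simp
  refine ⟨(-1) ^ (((Fin.last (2 * n + 1) : Fin (2 * n + 1 + 1)) : ℕ) + (col0 n : ℕ)) *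
    (-1) ^ (n + 2 * n), ?_, ?_⟩
  · rw [← pow_add, ← mul_pow]
    simp
  · have : (Matrix.submatrix (n := Fin (2 * n + 1 + 1)) (m := Fin (2 * n + 1 + 1)) N
      (Fin.last (2 * n + 1)).succAbove (Fin.succAbove (n := 2 * n + 1) (col0 n))).det
        = _ := hdet
    rw [this]
    ring

theorem cof_exists {R : Type*} [CommRing R] (A B : R[X]) (d n : ℕ)
    (hA : A.natDegree ≤ d) (hB : B.natDegree ≤ d) (hn : n ≤ d) :
    ∃ U V T : R[X], U.natDegree ≤ n ∧ V.natDegree ≤ n ∧ U * A + V * B = X ^ n * T ∧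
      T.degree < ((d - n : ℕ) : WithBot ℕ) ∧
      (n < d → T = symSubres A B d (n + 1)) ∧
      (1 ≤ n → ∃ s : R, s * s = 1 ∧
        V.coeff n = s * (A.coeff d * (symSubres A B d n).coeff 0)) := by
  classical
  let a : ℕ → R := fun r => if h : r < 2 * (n + 1) then
    (sylvMat A B d (n + 1) 0).adjugate (col0 n) ⟨r, h⟩ else 0
  have hg : ∀ m, gdet A B d n m =
      ∑ r ∈ Finset.range (n + 1 + (n + 1)), a r * (rowPoly A B n r).coeff m := by
    intro m
    have h2 : n + 1 + (n + 1) = 2 * (n + 1) := by ring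
    rw [h2, Finset.sum_range]
    unfold gdet
    rw [← Matrix.cramer_apply, Matrix.cramer_eq_adjugate_mulVec]
    simp only [Matrix.mulVec, dotProduct]
    apply Finset.sum_congr rfl
    intro r _
    simp [a]
  have hdegsum : ∀ f : ℕ → R,
      (∑ i ∈ Finset.range (n + 1), C (f i) * X ^ i).natDegree ≤ n := by
    intro f
    apply natDegree_sum_le_of_forall_le
    intro i hi
    refine (natDegree_C_mul_X_pow_le _ _).trans ?_
    have := Finset.mem_range.mp hi
    omega
  refine ⟨∑ i ∈ Finset.range (n + 1), C (a i) * X ^ i,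
    ∑ i ∈ Finset.range (n + 1), C (a (n + 1 + i)) * X ^ i,
    ∑ l ∈ Finset.range (d - n), C (gdet A B d n (n + l)) * X ^ l,
    hdegsum _, hdegsum _, ?_, ?_, ?_, ?_⟩
  · ext m
    have hL : ((∑ i ∈ Finset.range (n + 1), C (a i) * X ^ i) * A +
        (∑ i ∈ Finset.range (n + 1), C (a (n + 1 + i)) * X ^ i) * B).coeff m =
        gdet A B d n m := by
      rw [hg, Finset.sum_range_add _ (n + 1) (n + 1), coeff_add, Finset.sum_mul, Finset.sum_mul, finsetSum_coeff,
        finsetSum_coeff]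
      congr 1
      · apply Finset.sum_congr rfl
        intro i hi
        rw [mul_assoc, coeff_C_mul, rowPoly, if_pos (Finset.mem_range.mp hi)]
      · apply Finset.sum_congr rfl
        intro i hi
        rw [mul_assoc, coeff_C_mul, rowPoly, if_neg (by omega), Nat.add_sub_cancel_left]
    rw [hL, coeff_X_pow_mul']
    split_ifs with h
    · rw [finsetSum_coeff]
      simp only [coeff_C_mul, coeff_X_pow, mul_ite, mul_one, mul_zero]
      rw [Finset.sum_ite_eq]
      split_ifs with h3
      · congr 1; omega
      · apply gdet_zero _ _ _ _ _ hA hB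
        rw [Finset.mem_range] at h3
        omega
    · exact gdet_zero _ _ _ _ _ hA hB (Or.inl (by omega))
  · rw [degree_lt_iff_coeff_zero]
    intro m hm
    rw [finsetSum_coeff]
    apply Finset.sum_eq_zero
    intro l hl
    have := Finset.mem_range.mp hl
    rw [coeff_C_mul, coeff_X_pow, if_neg (by omega), mul_zero]
  · intro hlt
    have e : d - (n + 1) + 1 = d - n := by omega
    simp [symSubres, e, gdet_eq]
  · intro h1
    obtain ⟨s, hs, hs2⟩ := last_cof A B d n hA hB h1
    refine ⟨s, hs, ?_⟩
    have e0 : (symSubres A B d n).coeff 0 = (sylvMat A B d n 0).det := by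
      rw [symSubres, if_neg (by omega), finsetSum_coeff]
      simp [coeff_X_pow]
    rw [e0, ← hs2, finsetSum_coeff]
    simp only [coeff_C_mul, coeff_X_pow, mul_ite, mul_one, mul_zero]
    rw [Finset.sum_ite_eq, if_pos (by simp)]
    simp only [a]
    rw [dif_pos (by omega)]
    congr 1
    apply Fin.ext
    simp
    omega

theorem exists_div {R : Type*} [CommRing R] [IsDomain R] (A B : R[X]) (d j α β : ℕ)
    (hA : A.natDegree = d) (hB : B.natDegree ≤ d) (hAval : A.coeff 0 ≠ 0)
    (hj1 : 1 ≤ j) (hjd : j < d) (hdef : IsDefective A B d j α β) :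
    ∃ P Q R' : R[X], symSubres A B d (j + 1) = X ^ α * P ∧ P.coeff 0 ≠ 0 ∧
      P.natDegree = d - j - (α + β) ∧
      R'.degree < ((d - j - (α + β) : ℕ) : WithBot ℕ) ∧
      C ((symSubres A B d (j + 1)).leadingCoeff * (symSubres A B d (j + α + β)).coeff 0) *
        symSubres A B d j = Q * P + X ^ β * R' := by
  obtain ⟨-, hd2, hne, hv, hd3⟩ := hdef
  have hA0 : A ≠ 0 := by rintro rfl; simp at hAval
  have hXA : ¬ (X : R[X]) ∣ A := by rwa [X_dvd_iff]
  obtain ⟨P, hP⟩ : X ^ α ∣ symSubres A B d (j + 1) := by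
    rw [X_pow_dvd_iff]
    intro m hm
    exact coeff_eq_zero_of_lt_natTrailingDegree (by omega)
  have hP0 : P.coeff 0 ≠ 0 := by
    have : (symSubres A B d (j + 1)).coeff α ≠ 0 := by
      rw [← hv]
      exact mt trailingCoeff_eq_zero.mp hne
    rw [hP] at this
    simpa [coeff_X_pow_mul'] using this
  have hPne : P ≠ 0 := by rintro rfl; simp at hP0
  have hXP : ¬ (X : R[X]) ∣ P := by rwa [X_dvd_iff]
  have hPdeg : (symSubres A B d (j + 1)).natDegree = α + P.natDegree := by
    rw [hP, natDegree_mul (pow_ne_zero _ X_ne_zero) hPne, natDegree_X_pow]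
  obtain ⟨U0, V0, T0, hU0, hV0, h0, -, hT0, -⟩ :=
    cof_exists A B d (j - 1) hA.le hB (by omega)
  obtain ⟨U1, V1, T1, hU1, hV1, h1, hT1deg, hT1, -⟩ :=
    cof_exists A B d j hA.le hB (by omega)
  obtain ⟨U2, V2, T2, hU2, hV2, h2, hT2, -, hc⟩ :=
    cof_exists A B d (j + α + β) hA.le hB (by omega)
  obtain ⟨s, hs, hs2⟩ := hc (by omega)
  have hT0' : T0 = symSubres A B d j := by
    rw [hT0 (by omega)]; congr 1; omega
  have hT1' := hT1 hjd
  rw [← hT1'] at hP hne hv hd3 hPdeg ⊢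
  rw [← hT0'] at hd2 ⊢
  generalize hσ : (symSubres A B d (j + α + β)).coeff 0 = σ at hs2 ⊢
  have hβ : 1 ≤ β := by
    have := (natDegree_lt_iff_degree_lt hne).mpr hT1deg
    omega
  have hT2n : T2.natDegree + (j + α + β) ≤ d := by
    by_cases h : T2 = 0
    · subst h; simp; omega
    · have := (natDegree_lt_iff_degree_lt h).mpr hT2
      omega
  have dm : ∀ (p q : R[X]) (m n : ℕ), p.natDegree ≤ m → q.natDegree ≤ n →
      (p * q).natDegree ≤ m + n := fun p q m n hp hq => natDegree_mul_le.trans (add_le_add hp hq)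
  -- the determinant of the cofactors at `j`, `j+1` is a monomial
  obtain ⟨c, hW⟩ : ∃ c : R, U0 * V1 - U1 * V0 = C c * X ^ (j - 1) := by
    have hWA : (U0 * V1 - U1 * V0) * A = X ^ (j - 1) * T0 * V1 - X ^ j * T1 * V0 := by
      rw [← h0, ← h1]; ring
    obtain ⟨W, hW⟩ : X ^ (j - 1) ∣ U0 * V1 - U1 * V0 := by
      apply prime_X.pow_dvd_of_dvd_mul_right (b := A) _ hXA
      rw [hWA]
      exact dvd_sub (Dvd.dvd.mul_right (dvd_mul_right _ _) _)
        (Dvd.dvd.mul_right (Dvd.dvd.mul_right (pow_dvd_pow _ (by omega)) _) _)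
    have hWd : W.natDegree = 0 := by
      by_cases hW0 : W = 0
      · simp [hW0]
      have e : (X ^ (j - 1) * W * A).natDegree = j - 1 + W.natDegree + d := by
        rw [natDegree_mul (mul_ne_zero (pow_ne_zero _ X_ne_zero) hW0) hA0,
          natDegree_mul (pow_ne_zero _ X_ne_zero) hW0, natDegree_X_pow, hA]
      rw [← hW, hWA] at e
      have b := natDegree_sub_le_of_le
        (dm _ _ _ _ (dm _ _ _ _ (natDegree_X_pow_le (R := R) (j - 1)) (le_refl T0.natDegree)) hV1)
        (dm _ _ _ _ (dm _ _ _ _ (natDegree_X_pow_le (R := R) j) (le_refl T1.natDegree)) hV0)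
      rw [e] at b
      rcases le_max_iff.mp b with b | b <;> omega
    rw [eq_C_of_natDegree_eq_zero hWd] at hW
    exact ⟨_, by rw [hW, mul_comm]⟩
  -- the determinant of the cofactors at `j+1`, `k+1` is an explicit monomial
  have hE : U1 * V2 - U2 * V1 = C (s * (T1.leadingCoeff * σ)) * X ^ (j + α) := by
    have hEA : (U1 * V2 - U2 * V1) * A =
        X ^ j * T1 * V2 - X ^ (j + α + β) * T2 * V1 := by
      rw [← h1, ← h2]; ring
    obtain ⟨W, hW⟩ : X ^ (j + α) ∣ U1 * V2 - U2 * V1 := by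
      apply prime_X.pow_dvd_of_dvd_mul_right (b := A) _ hXA
      rw [hEA]
      refine dvd_sub (Dvd.dvd.mul_right ?_ _)
        (Dvd.dvd.mul_right (Dvd.dvd.mul_right (pow_dvd_pow _ (by omega)) _) _)
      rw [hP, pow_add]
      exact ⟨P, by ring⟩
    have hWd : W.natDegree = 0 := by
      by_cases hW0 : W = 0
      · simp [hW0]
      have e : (X ^ (j + α) * W * A).natDegree = j + α + W.natDegree + d := by
        rw [natDegree_mul (mul_ne_zero (pow_ne_zero _ X_ne_zero) hW0) hA0,
          natDegree_mul (pow_ne_zero _ X_ne_zero) hW0, natDegree_X_pow, hA]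
      rw [← hW, hEA] at e
      have b := natDegree_sub_le_of_le
        (dm _ _ _ _ (dm _ _ _ _ (natDegree_X_pow_le (R := R) j) (le_refl T1.natDegree)) hV2)
        (dm _ _ _ _ (dm _ _ _ _ (natDegree_X_pow_le (R := R) (j + α + β))
          (le_refl T2.natDegree)) hV1)
      rw [e] at b
      rcases le_max_iff.mp b with b | b
      · omega
      · have b' : T2 = 0 ∨ T2.natDegree + (j + α + β) < d := by
          by_cases h : T2 = 0
          · exact Or.inl h
          · have := (natDegree_lt_iff_degree_lt h).mpr hT2
            right; omega
        omega
    have hWc := eq_C_of_natDegree_eq_zero hWd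
    -- compare the coefficients of degree `d + j + α`
    have hlc : W.coeff 0 * A.coeff d = T1.leadingCoeff * V2.coeff (j + α + β) := by
      have e := congrArg (fun p => coeff p (d + (j + α))) hEA
      simp only [coeff_sub] at e
      have l : ((U1 * V2 - U2 * V1) * A).coeff (d + (j + α)) = W.coeff 0 * A.coeff d := by
        rw [hW, mul_assoc, coeff_X_pow_mul, hWc, coeff_C_mul]
        simp
      have r1 : (X ^ j * T1 * V2).coeff (d + (j + α)) =
          T1.leadingCoeff * V2.coeff (j + α + β) := by
        have : d + (j + α) = T1.natDegree + (j + α + β) + j := by omega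
        rw [mul_assoc, this, coeff_X_pow_mul, coeff_mul_add_eq_of_natDegree_le le_rfl hV2]
        rfl
      have r2 : (X ^ (j + α + β) * T2 * V1).coeff (d + (j + α)) = 0 := by
        by_cases h : T2 = 0
        · simp [h]
        apply coeff_eq_zero_of_natDegree_lt
        have := (natDegree_lt_iff_degree_lt h).mpr hT2
        refine lt_of_le_of_lt (dm _ _ _ _ (dm _ _ _ _ (natDegree_X_pow_le (R := R) (j + α + β))
          (le_refl T2.natDegree)) hV1) ?_
        omega
      rw [l, r1, r2, sub_zero] at e
      exact e
    have hAd : A.coeff d ≠ 0 := by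
      rw [← hA]; exact leadingCoeff_ne_zero.mpr hA0
    have hW0 : W.coeff 0 = s * (T1.leadingCoeff * σ) := by
      apply mul_right_cancel₀ hAd
      rw [hlc, hs2]; ring
    rw [hW, hWc, hW0, mul_comm]
  -- Cramer identity
  have hcr : C (s * (T1.leadingCoeff * σ)) * X ^ (j + α) * (X ^ (j - 1) * T0) =
      (U0 * V2 - U2 * V0) * (X ^ j * (X ^ α * P)) -
        C c * X ^ (j - 1) * (X ^ (j + α + β) * T2) := by
    rw [← hE, ← hW, ← hP, ← h0, ← h1, ← h2]; ring
  have hcr2 : C (s * (T1.leadingCoeff * σ)) * (X ^ (j - 1) * T0) =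
      (U0 * V2 - U2 * V0) * P - C c * X ^ (j - 1) * (X ^ β * T2) := by
    apply mul_left_cancel₀ (pow_ne_zero (j + α) (X_ne_zero (R := R)))
    linear_combination hcr
  obtain ⟨Q, hQ⟩ : X ^ (j - 1) ∣ U0 * V2 - U2 * V0 := by
    apply prime_X.pow_dvd_of_dvd_mul_right (b := P) _ hXP
    exact ⟨C (s * (T1.leadingCoeff * σ)) * T0 + C c * (X ^ β * T2), by
      linear_combination -hcr2⟩
  have hcr3 : C (s * (T1.leadingCoeff * σ)) * T0 = Q * P - C c * (X ^ β * T2) := by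
    apply mul_left_cancel₀ (pow_ne_zero (j - 1) (X_ne_zero (R := R)))
    rw [hQ] at hcr2
    linear_combination hcr2
  have hd' : d - (j + α + β) = d - j - (α + β) := by omega
  refine ⟨P, C s * Q, C (-(s * c)) * T2, hP, hP0, by omega, ?_, ?_⟩
  · rw [← hd']
    rw [← smul_eq_C_mul]
    exact lt_of_le_of_lt (degree_smul_le _ _) hT2
  · have hsC : (C s * C s : R[X]) = 1 := by rw [← C_mul, hs, C_1]
    rw [C_mul] at hcr3
    rw [C_neg, C_mul (a := s) (b := c)]
    linear_combination (C s) * hcr3 - C (T1.leadingCoeff * σ) * T0 * hsC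

theorem div_unique {K : Type*} [Field K] (P Q R Q' R' : K[X]) (β e : ℕ) (hP0 : P.coeff 0 ≠ 0)
    (hP : P.natDegree = e) (hR : R.degree < (e : WithBot ℕ)) (hR' : R'.degree < (e : WithBot ℕ))
    (h : Q' * P + X ^ β * R' = Q * P + X ^ β * R) : Q = Q' ∧ R = R' := by
  have hPne : P ≠ 0 := by rintro rfl; simp at hP0
  have hXP : ¬ (X : K[X]) ∣ P := by rwa [X_dvd_iff]
  obtain ⟨W, hW⟩ : X ^ β ∣ Q - Q' := by
    apply prime_X.pow_dvd_of_dvd_mul_right (b := P) _ hXP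
    exact ⟨R' - R, by linear_combination -h⟩
  have h2 : P * W = R' - R := by
    apply mul_left_cancel₀ (pow_ne_zero β (X_ne_zero (R := K)))
    linear_combination -h - P * hW
  have h3 : R' - R = 0 := by
    apply eq_zero_of_dvd_of_degree_lt ⟨W, h2.symm⟩
    rw [degree_eq_natDegree hPne, hP]
    exact lt_of_le_of_lt (degree_sub_le _ _) (max_lt hR' hR)
  rw [h3] at h2
  have hW0 : W = 0 := (mul_eq_zero.mp h2).resolve_left hPne
  rw [hW0, mul_zero] at hW
  exact ⟨sub_eq_zero.mp hW, (sub_eq_zero.mp h3).symm⟩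

end SymAux

/-- Fraction-free divisions: if `(S_j, S_{j+1})` is `(α,β)`-defective with `1 ≤ j ≤ d-1` and
`k = j+α+β`, then the symmetric quotient and the symmetric remainder of
`lc(S_{j+1})·S_k(0)·S_j` by `S_{j+1}` have all their coefficients in `D`. -/
theorem symmetric_division_fraction_free (D : Subring ℂ) (A B : Polynomial D) (d j α β : ℕ)
    (hAdeg : A.degree = (d : ℕ)) (hBdeg : B.degree = (d : ℕ))
    (hAval : A.coeff 0 ≠ 0) (hBval : B.coeff 0 ≠ 0)
    (hj1 : 1 ≤ j) (hjd : j < d)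
    (hdef : IsDefective A B d j α β) :
    ∀ Q R : Polynomial ℂ,
      Q.degree = ((α + β : ℕ) : WithBot ℕ) →
      R.degree < ((d - j - (α + β) : ℕ) : WithBot ℕ) →
      (C ((symSubres A B d (j + 1)).leadingCoeff *
          (symSubres A B d (j + α + β)).coeff 0) * symSubres A B d j).map D.subtype =
        Q * ((symSubres A B d (j + 1)).map D.subtype /ₘ X ^ α) + X ^ β * R →
      (∀ n, Q.coeff n ∈ D) ∧ (∀ n, R.coeff n ∈ D) := by
  intro Q R _ hRdeg h
  have hA : A.natDegree = d := natDegree_eq_of_degree_eq_some hAdeg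
  have hB : B.natDegree = d := natDegree_eq_of_degree_eq_some hBdeg
  obtain ⟨P, Q', R', hP, hP0, hPd, hR', hdiv⟩ :=
    SymAux.exists_div A B d j α β hA hB.le hAval hj1 hjd hdef
  have hinj : Function.Injective D.subtype := Subtype.val_injective
  have hq : (symSubres A B d (j + 1)).map D.subtype /ₘ X ^ α = P.map D.subtype := by
    rw [hP, Polynomial.map_mul, Polynomial.map_pow, map_X]
    exact mul_divByMonic_cancel_left _ (monic_X_pow α)
  rw [hq, hdiv, Polynomial.map_add, Polynomial.map_mul, Polynomial.map_mul, Polynomial.map_pow,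
    map_X] at h
  have hP0' : (P.map D.subtype).coeff 0 ≠ 0 := by
    rw [coeff_map]
    exact fun h0 => hP0 (hinj (by rw [h0, map_zero]))
  obtain ⟨h1, h2⟩ := SymAux.div_unique (P.map D.subtype) Q R (Q'.map D.subtype)
    (R'.map D.subtype) β (d - j - (α + β)) hP0'
    (by rw [natDegree_map_eq_of_injective hinj, hPd]) hRdeg
    (by rw [degree_map_eq_of_injective hinj]; exact hR') h
  subst h1 h2
  refine ⟨fun n => ?_, fun n => ?_⟩
  · rw [coeff_map]; exact (Q'.coeff n).2
  · rw [coeff_map]; exact (R'.coeff n).2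
end
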